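/- arXiv:math/0405393 — 3 statements merged into one kernel-verified Lean document; each statement's English description precedes it below -/
import Mathlib

section
/- For every prime number q and every integer d ≥ 1, every continuous map f : Δ^{(d+1)(q-1)} → ℝ^d admits a Tverberg partition, i.e. there exist q pairwise disjoint nonempty subsets S_1, …, S_q of Fin ((d+1)*(q-1)+1) with ⋂_{i=1}^q f(σ_{S_i}) ≠ ∅. -/
open scoped BigOperators

noncomputable section

/-- Euclidean space `ℝ^d`. -/
abbrev Euc (d : ℕ) : Type := EuclideanSpace ℝ (Fin d)

/-- The standard `N`-simplex `Δ^N ⊆ ℝ^{N+1}`. -/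
def stdSimp (N : ℕ) : Set (Fin (N+1) → ℝ) :=
  {x | (∀ i, 0 ≤ x i) ∧ ∑ i, x i = 1}

/-- The face `σ_S` of `Δ^N` spanned by the vertices in `S`. -/
def simpFace {N : ℕ} (S : Finset (Fin (N+1))) : Set (Fin (N+1) → ℝ) :=
  {x ∈ stdSimp N | ∀ i ∉ S, x i = 0}

/-- The `k`-skeleton `Δ_k^N` of the standard `N`-simplex. -/
def skel (N k : ℕ) : Set (Fin (N+1) → ℝ) :=
  {x ∈ stdSimp N | {i | x i ≠ 0}.ncard ≤ k + 1}

/-- A Tverberg partition for (the relevant restriction of) `f`: a set of `q`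
pairwise disjoint nonempty vertex subsets whose faces have images with a common point. -/
def IsTverbergPartition (q : ℕ) {N d : ℕ}
    (f : (Fin (N+1) → ℝ) → Euc d) (P : Finset (Finset (Fin (N+1)))) : Prop :=
  P.card = q ∧ (∀ S ∈ P, S.Nonempty) ∧
  (∀ S ∈ P, ∀ T ∈ P, S ≠ T → Disjoint S T) ∧
  (⋂ S ∈ P, f '' simpFace S).Nonempty

/-!
If no coloring `c` of the vertices by `ZMod q` worked, an equivariant map `F` from the join of
`N + 1` copies of `ZMod q` to `(ZMod q → ℝ) ^ (d + 1)`, where `N = (d + 1) * (q - 1)`, would miss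
the fixed points, since at a fixed point all rows have the same sum and, after rescaling, the same
image under `f`. This contradicts a Borsuk–Ulam theorem, for the following reason. The join
carries chains `z 0, …, z (N + 1)`, with `z k` of dimension `k - 1`, whose boundaries realize the
periodic resolution of the cyclic group. Subdivide them finely. Recording, for each small simplex
and each coordinate, the indices at which `F` is maximal gives an equivariant map to the faces of
the `(d + 1)`-fold join of the boundary of the simplex on `ZMod q`. On the poset of those faces
the group acts freely because `q` is prime, so there are cochains dual to the periodic resolution,
and they show that the image of `z (N + 1)` involves a strict chain of `N + 1` faces. But a face
has between `1` and `N` vertices.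
-/

/-! ### Augmented ordered chains -/

/-- Augmented ordered simplicial chains: a list of vertices is an ordered simplex (possibly with
repeated vertices), and the empty list is the simplex of dimension `-1`. -/
abbrev OrderedChain (R X : Type*) [Semiring R] : Type _ := List X →₀ R

namespace OrderedChain

/-- The codimension one faces of an ordered simplex. -/
def facets {X : Type*} (l : List X) : Set (List X) :=
  {m | m.Sublist l ∧ m.length + 1 = l.length}

/-- A family of ordered simplices that is closed under taking faces. -/
def IsSubcomplex {X : Type*} (A : Set (List X)) : Prop :=
  ∀ l ∈ A, facets l ⊆ A

/-- The ordered simplices in which two consecutive vertices agree. -/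
def degenerate (X : Type*) : Set (List X) := {l | ¬ l.IsChain (· ≠ ·)}

@[elab_as_elim]
lemma facet_induction {X : Type*} {p : List X → Prop} (nil : p [])
    (step : ∀ l ≠ [], (∀ m ∈ facets l, p m) → p l) (l : List X) : p l := by
  induction hn : l.length generalizing l with
  | zero => rwa [List.length_eq_zero_iff.1 hn]
  | succ n ih =>
    refine step l (List.ne_nil_of_length_eq_add_one hn) fun m hm => ih m ?_
    exact Nat.succ_injective (hm.2.trans hn)

section Operators

variable {R : Type*} [Ring R] {X Y : Type*}

/-- The cone operator: prepend the apex `a` to every simplex. -/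
def cone (a : X) : OrderedChain R X →ₗ[R] OrderedChain R X :=
  Finsupp.lmapDomain R R (List.cons a)

/-- The chain map induced by a map of vertices. -/
def map (g : X → Y) : OrderedChain R X →ₗ[R] OrderedChain R Y :=
  Finsupp.lmapDomain R R (List.map g)

/-- The boundary of a single ordered simplex; the boundary of a point is the empty simplex. -/
def simplexBoundary : List X → OrderedChain R X
  | [] => 0
  | a :: l => Finsupp.single l 1 - cone a (simplexBoundary l)

/-- The boundary operator of the augmented ordered chain complex. -/
def boundary : OrderedChain R X →ₗ[R] OrderedChain R X :=
  Finsupp.linearCombination R simplexBoundary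

@[simp] lemma cone_single (a : X) (l : List X) (r : R) :
    cone a (Finsupp.single l r) = Finsupp.single (a :: l) r := by
  simp [cone]

@[simp] lemma map_single (g : X → Y) (l : List X) (r : R) :
    map g (Finsupp.single l r) = Finsupp.single (l.map g) r := by
  simp [map]

@[simp] lemma boundary_single_one (l : List X) :
    boundary (Finsupp.single l (1 : R)) = simplexBoundary l := by
  simp [boundary]

section Supported

variable {M : Type*} [AddCommGroup M] [Module R M] {A : Set (List X)}

lemma hom_ext {Φ Ψ : OrderedChain R X →ₗ[R] M}
    (h : ∀ l, Φ (Finsupp.single l 1) = Ψ (Finsupp.single l 1)) : Φ = Ψ :=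
  Finsupp.lhom_ext' fun l => LinearMap.ext_ring (h l)

lemma apply_mem_of_mem_supported {W : Submodule R M} {Φ : OrderedChain R X →ₗ[R] M}
    (h : ∀ l ∈ A, Φ (Finsupp.single l 1) ∈ W) {c : OrderedChain R X}
    (hc : c ∈ Finsupp.supported R R A) : Φ c ∈ W := by
  rw [Finsupp.supported_eq_span_single] at hc
  refine (Submodule.span_le (p := W.comap Φ)).2 ?_ hc
  rintro _ ⟨l, hl, rfl⟩
  exact h l hl

lemma apply_eq_of_mem_supported {Φ Ψ : OrderedChain R X →ₗ[R] M}
    (h : ∀ l ∈ A, Φ (Finsupp.single l 1) = Ψ (Finsupp.single l 1)) {c : OrderedChain R X}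
    (hc : c ∈ Finsupp.supported R R A) : Φ c = Ψ c := by
  rw [Finsupp.supported_eq_span_single] at hc
  exact LinearMap.eqOn_span (Set.forall_mem_image.2 h) hc

lemma cone_mem_supported {B : Set (List X)} {a : X} (h : ∀ l ∈ A, a :: l ∈ B)
    {c : OrderedChain R X} (hc : c ∈ Finsupp.supported R R A) :
    cone a c ∈ Finsupp.supported R R B :=
  apply_mem_of_mem_supported (fun l hl => by
    rw [cone_single]; exact Finsupp.single_mem_supported R 1 (h l hl)) hc

lemma map_mem_supported {B : Set (List Y)} {g : X → Y} (h : ∀ l ∈ A, l.map g ∈ B)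
    {c : OrderedChain R X} (hc : c ∈ Finsupp.supported R R A) :
    map g c ∈ Finsupp.supported R R B :=
  apply_mem_of_mem_supported (fun l hl => by
    rw [map_single]; exact Finsupp.single_mem_supported R 1 (h l hl)) hc

end Supported

lemma boundary_cone (a : X) (c : OrderedChain R X) :
    boundary (cone a c) = c - cone a (boundary c) := by
  have : boundary ∘ₗ cone a = LinearMap.id - cone a ∘ₗ boundary (R := R) :=
    hom_ext fun l => by simp [simplexBoundary]
  exact LinearMap.congr_fun this c

lemma boundary_simplexBoundary (l : List X) :
    boundary (simplexBoundary l : OrderedChain R X) = 0 := by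
  induction l with
  | nil => simp [simplexBoundary]
  | cons a l ih => simp [simplexBoundary, boundary_cone, ih]

lemma boundary_boundary (c : OrderedChain R X) : boundary (boundary c) = 0 := by
  have : boundary ∘ₗ boundary (R := R) (X := X) = 0 :=
    hom_ext fun l => by simp [boundary_simplexBoundary]
  exact LinearMap.congr_fun this c

lemma map_cone (g : X → Y) (a : X) (c : OrderedChain R X) :
    map g (cone a c) = cone (g a) (map g c) := by
  have : map g ∘ₗ cone a = cone (g a) ∘ₗ map (R := R) g := hom_ext fun l => by simp
  exact LinearMap.congr_fun this c

lemma map_simplexBoundary (g : X → Y) (l : List X) :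
    map g (simplexBoundary l : OrderedChain R X) = simplexBoundary (l.map g) := by
  induction l with
  | nil => simp [simplexBoundary]
  | cons a l ih => simp [simplexBoundary, map_cone, ih]

lemma boundary_map (g : X → Y) (c : OrderedChain R X) :
    boundary (map g c) = map g (boundary c) := by
  have : boundary ∘ₗ map g = map g ∘ₗ boundary (R := R) (X := X) :=
    hom_ext fun l => by simp [map_simplexBoundary]
  exact LinearMap.congr_fun this c

lemma map_pow (g : X → X) (n : ℕ) :
    (map g : Module.End R (OrderedChain R X)) ^ n = map g^[n] := by
  induction n with
  | zero => exact hom_ext fun l => by simp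
  | succ n ih =>
    rw [pow_succ', ih, Function.iterate_succ']
    exact hom_ext fun l => by simp [Module.End.mul_apply]

lemma simplexBoundary_mem_supported_facets (l : List X) :
    (simplexBoundary l : OrderedChain R X) ∈ Finsupp.supported R R (facets l) := by
  induction l with
  | nil => simp [simplexBoundary]
  | cons a l ih =>
    refine Submodule.sub_mem _ ?_ (cone_mem_supported ?_ ih)
    · exact Finsupp.single_mem_supported R 1 ⟨List.sublist_cons_self a l, rfl⟩
    · rintro m ⟨hm, hlen⟩
      exact ⟨hm.cons_cons a, by simp [hlen]⟩

lemma cons_mem_degenerate (a : X) {l : List X} (hl : l ∈ degenerate X) : a :: l ∈ degenerate X :=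
  fun h => hl h.of_cons

lemma simplexBoundary_mem_supported_degenerate {l : List X} (hl : l ∈ degenerate X) :
    (simplexBoundary l : OrderedChain R X) ∈ Finsupp.supported R R (degenerate X) := by
  induction l with
  | nil => exact absurd List.isChain_nil hl
  | cons a l ih =>
    by_cases hdeg : l ∈ degenerate X
    · exact Submodule.sub_mem _ (Finsupp.single_mem_supported R 1 hdeg)
        (cone_mem_supported (fun _ => cons_mem_degenerate a) (ih hdeg))
    cases l with
    | nil => exact absurd (List.isChain_singleton a) hl
    | cons b l =>
      obtain rfl : a = b := by
        by_contra hab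
        exact hl (List.isChain_cons_cons.2 ⟨hab, not_not.1 hdeg⟩)
      -- The two facets omitting one of the equal vertices cancel.
      have hcancel : (simplexBoundary (a :: a :: l) : OrderedChain R X) =
          (cone a ∘ₗ cone a) (simplexBoundary l) := by
        simp [simplexBoundary]
      rw [hcancel]
      refine apply_mem_of_mem_supported (fun m _ => ?_) (simplexBoundary_mem_supported_facets l)
      simpa using Finsupp.single_mem_supported R 1
        (show a :: a :: m ∈ degenerate X from fun h => (List.isChain_cons_cons.1 h).1 rfl)

end Operators

/-! ### Subdivision -/

section Subdivision

variable {R : Type*} [Ring R] {X Y : Type*}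

/-- The subdivision of a simplex that cones the subdivided boundary of each face `l` from the apex
`b l`. The natural number is the recursion depth; it has to be at least the length of the list. -/
def subdivideSimplex (b : List X → Y) : ℕ → List X → OrderedChain R Y
  | 0, _ => Finsupp.single [] 1
  | n + 1, l => cone (b l) (Finsupp.linearCombination R (subdivideSimplex b n) (simplexBoundary l))

/-- The subdivision chain map that places the vertex `b l` over each simplex `l`. -/
def subdivide (b : List X → Y) : OrderedChain R X →ₗ[R] OrderedChain R Y :=
  Finsupp.linearCombination R fun l => subdivideSimplex b l.length l

lemma subdivide_nil (b : List X → Y) :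
    subdivide b (Finsupp.single [] (1 : R)) = Finsupp.single [] 1 := by
  simp [subdivide, subdivideSimplex]

lemma subdivide_single (b : List X → Y) {l : List X} (hl : l ≠ []) :
    subdivide b (Finsupp.single l (1 : R)) = cone (b l) (subdivide b (simplexBoundary l)) := by
  obtain ⟨n, hn⟩ := Nat.exists_eq_add_one_of_ne_zero (mt List.length_eq_zero_iff.1 hl)
  have hfacets : Finsupp.linearCombination R (subdivideSimplex (R := R) b n) (simplexBoundary l) =
      subdivide b (simplexBoundary l) := by
    refine apply_eq_of_mem_supported (fun m hm => ?_) (simplexBoundary_mem_supported_facets l)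
    obtain rfl : m.length = n := Nat.succ_injective (hm.2.trans hn)
    simp [subdivide]
  rw [← hfacets]
  simp [subdivide, hn, subdivideSimplex]

lemma boundary_subdivide (b : List X → Y) (c : OrderedChain R X) :
    boundary (subdivide b c) = subdivide b (boundary c) := by
  suffices h : ∀ l, boundary (subdivide b (Finsupp.single l (1 : R))) =
      subdivide b (simplexBoundary l) by
    have : boundary ∘ₗ subdivide b = subdivide b ∘ₗ boundary (R := R) (X := X) :=
      hom_ext fun l => by simpa using h l
    exact LinearMap.congr_fun this c
  refine fun l => facet_induction ?_ (fun l hl ih => ?_) l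
  · simp [subdivide_nil, simplexBoundary]
  · have hcycle : boundary (subdivide b (simplexBoundary l : OrderedChain R X)) =
        subdivide b (boundary (simplexBoundary l)) :=
      apply_eq_of_mem_supported (Φ := boundary ∘ₗ subdivide b) (Ψ := subdivide b ∘ₗ boundary)
        (fun m hm => by simpa using ih m hm) (simplexBoundary_mem_supported_facets l)
    rw [subdivide_single b hl, boundary_cone, hcycle, boundary_simplexBoundary]
    simp

lemma subdivide_map {b : List X → Y} {g : X → X} {g' : Y → Y} {A : Set (List X)}
    (hA : IsSubcomplex A) (hb : ∀ l ∈ A, l ≠ [] → b (l.map g) = g' (b l)) {c : OrderedChain R X}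
    (hc : c ∈ Finsupp.supported R R A) : subdivide b (map g c) = map g' (subdivide b c) := by
  suffices h : ∀ l ∈ A, (subdivide b ∘ₗ map g) (Finsupp.single l (1 : R)) =
      (map g' ∘ₗ subdivide b) (Finsupp.single l 1) from apply_eq_of_mem_supported h hc
  refine fun l => facet_induction (fun _ => ?_) (fun l hl ih hlA => ?_) l
  · simp [subdivide_nil]
  · have hfacets : (subdivide b ∘ₗ map g) (simplexBoundary l : OrderedChain R X) =
        (map g' ∘ₗ subdivide b) (simplexBoundary l) :=
      apply_eq_of_mem_supported (fun m hm => ih m hm (hA l hlA hm))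
        (simplexBoundary_mem_supported_facets l)
    rw [LinearMap.comp_apply, LinearMap.comp_apply] at hfacets ⊢
    rw [map_single, subdivide_single b (by simpa), subdivide_single b hl, map_cone, hb l hlA hl,
      ← map_simplexBoundary, hfacets]

lemma subdivide_single_mem_supported {b : List X → Y} {T : List X → Set (List Y)}
    (hnil : [] ∈ T [])
    (hcons : ∀ l ≠ [], ∀ m ∈ facets l, ∀ s ∈ T m, b l :: s ∈ T l) (l : List X) :
    subdivide b (Finsupp.single l (1 : R)) ∈ Finsupp.supported R R (T l) := by
  refine facet_induction ?_ (fun l hl ih => ?_) l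
  · rw [subdivide_nil]
    exact Finsupp.single_mem_supported R 1 hnil
  · have hfacets : subdivide b (simplexBoundary l : OrderedChain R X) ∈
        Finsupp.supported R R (⋃ m ∈ facets l, T m) :=
      apply_mem_of_mem_supported
        (fun m hm => Finsupp.supported_mono (Set.subset_biUnion_of_mem hm) (ih m hm))
        (simplexBoundary_mem_supported_facets l)
    rw [subdivide_single b hl]
    refine cone_mem_supported (fun s hs => ?_) hfacets
    obtain ⟨m, hm, hsm⟩ := Set.mem_iUnion₂.1 hs
    exact hcons l hl m hm s hsm

lemma subdivide_single_mem_supported_length (b : List X → Y) (l : List X) :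
    subdivide b (Finsupp.single l (1 : R)) ∈
      Finsupp.supported R R {s | s.length = l.length} := by
  refine subdivide_single_mem_supported (T := fun l => {s | s.length = l.length}) ?_ ?_ l
  · rfl
  · rintro l - m ⟨-, hm⟩ s hs
    rw [Set.mem_ofPred_eq, List.length_cons, hs, hm]

-- In applications `H l` is a hull of `l`, such as its convex hull or the set of its faces.
lemma subdivide_single_mem_supported_pairwise {b : List X → Y} {A : Set (List X)}
    {H : List X → Set Y} {S : Y → Y → Prop} (hA : IsSubcomplex A)
    (hmem : ∀ l ∈ A, l ≠ [] → b l ∈ H l) (hmono : ∀ l, ∀ m ∈ facets l, H m ⊆ H l)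
    (hS : ∀ l ∈ A, l ≠ [] → ∀ y ∈ H l, S (b l) y) {l : List X} (hl : l ∈ A) :
    subdivide b (Finsupp.single l (1 : R)) ∈
      Finsupp.supported R R {s | (∀ y ∈ s, y ∈ H l) ∧ s.Pairwise S} := by
  have h : subdivide b (Finsupp.single l (1 : R)) ∈ Finsupp.supported R R
      {s | l ∈ A → (∀ y ∈ s, y ∈ H l) ∧ s.Pairwise S} := by
    refine subdivide_single_mem_supported
      (T := fun l => {s | l ∈ A → (∀ y ∈ s, y ∈ H l) ∧ s.Pairwise S}) ?_ ?_ l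
    · simp
    · intro l hne m hm s hs hlA
      obtain ⟨hsH, hsS⟩ := hs (hA l hlA hm)
      have hsl : ∀ y ∈ s, y ∈ H l := fun y hy => hmono l m hm (hsH y hy)
      exact ⟨List.forall_mem_cons.2 ⟨hmem l hlA hne, hsl⟩,
        List.pairwise_cons.2 ⟨fun y hy => hS l hlA hne y (hsl y hy), hsS⟩⟩
  refine Finsupp.supported_mono ?_ h
  exact fun s hs => hs hl

end Subdivision

/-! ### The periodic resolution of a cyclic group -/

section Cyclic

/-- The differentials `1, 1 - γ, 1 + γ + ⋯ + γ ^ (q - 1), 1 - γ, …` of the augmented periodic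
resolution of a cyclic group of order `q` with generator `γ`. -/
def cyclicDiff {A : Type*} [Ring A] (q : ℕ) (γ : A) : ℕ → A
  | 0 => 1
  | k + 1 => if Even k then 1 - γ else ∑ i ∈ Finset.range q, γ ^ i

lemma cyclicDiff_add_three {A : Type*} [Ring A] (q : ℕ) (γ : A) (k : ℕ) :
    cyclicDiff q γ (k + 3) = cyclicDiff q γ (k + 1) := by
  simp [cyclicDiff, Nat.even_add]

lemma cyclicDiff_mul_cyclicDiff {A : Type*} [Ring A] {q : ℕ} {γ : A} (h : γ ^ q = 1) (k : ℕ) :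
    cyclicDiff q γ (k + 2) * cyclicDiff q γ (k + 1) = 0 := by
  by_cases hk : Even k
  · simp [cyclicDiff, Nat.even_add_one, hk, geom_sum_mul_neg, h]
  · simp [cyclicDiff, Nat.even_add_one, hk, mul_neg_geom_sum, h]

section Module

variable {R M N : Type*} [Ring R] [AddCommGroup M] [AddCommGroup N] [Module R M] [Module R N]
  {γ : Module.End R M} {W : Submodule R M}

lemma cyclicDiff_apply_mem (hW : ∀ x ∈ W, γ x ∈ W) (q k : ℕ) {x : M} (hx : x ∈ W) :
    cyclicDiff q γ k x ∈ W := by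
  cases k with
  | zero => simpa [cyclicDiff] using hx
  | succ k =>
    rw [cyclicDiff]
    split_ifs
    · exact W.sub_mem hx (hW x hx)
    · rw [LinearMap.sum_apply]
      exact W.sum_mem fun i _ => Module.End.pow_apply_mem_of_forall_mem i hW x hx

lemma map_cyclicDiff_apply {γ' : Module.End R N} {Φ : M →ₗ[R] N} (hW : ∀ x ∈ W, γ x ∈ W)
    (hΦ : ∀ x ∈ W, Φ (γ x) = γ' (Φ x)) (q k : ℕ) {x : M} (hx : x ∈ W) :
    Φ (cyclicDiff q γ k x) = cyclicDiff q γ' k (Φ x) := by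
  have hpow : ∀ i, Φ ((γ ^ i) x) = (γ' ^ i) (Φ x) := by
    intro i
    induction i with
    | zero => simp
    | succ i ih =>
      rw [pow_succ', pow_succ', Module.End.mul_apply, Module.End.mul_apply,
        hΦ _ (Module.End.pow_apply_mem_of_forall_mem i hW x hx), ih]
  cases k with
  | zero => simp [cyclicDiff]
  | succ k =>
    rw [cyclicDiff, cyclicDiff]
    split_ifs
    · simp [hΦ x hx]
    · simp [hpow]

end Module

lemma boundary_cyclicDiff_map {R X : Type*} [Ring R] (q : ℕ) (g : X → X) (k : ℕ)
    (c : OrderedChain R X) :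
    boundary (cyclicDiff q (map g) k c) = cyclicDiff q (map g) k (boundary c) :=
  map_cyclicDiff_apply (W := ⊤) (by simp) (fun x _ => boundary_map g x) q k trivial

section FreeAction

variable {q : ℕ} {Λ M : Type*} [AddCommGroup M] {τ : Λ → Λ} {A : Set Λ} {r : Λ → ZMod q}

lemma phase_iterate (hτ : Set.MapsTo τ A A) (hr : ∀ x ∈ A, r (τ x) = r x + 1) {x : Λ}
    (hx : x ∈ A) (i : ℕ) : r (τ^[i] x) = r x + i := by
  induction i with
  | zero => simp
  | succ i ih =>
    rw [Function.iterate_succ_apply', hr _ (hτ.iterate i hx), ih]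
    push_cast
    ring

lemma exists_sub_apply_eq [NeZero q] (hτ : Set.MapsTo τ A A) (hr : ∀ x ∈ A, r (τ x) = r x + 1)
    {φ : Λ → M} (hφ : ∀ x ∈ A, ∑ i ∈ Finset.range q, φ (τ^[i] x) = 0) :
    ∃ ψ : Λ → M, (∀ x ∈ A, ψ x - ψ (τ x) = φ x) ∧ ∀ x, (∀ i, φ (τ^[i] x) = 0) → ψ x = 0 := by
  -- Sum `φ` along the orbit from `x` up to the last point before the phase returns to `0`.
  refine ⟨fun x => ∑ i ∈ Finset.range (q - (r x).val), φ (τ^[i] x), fun x hx => ?_,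
    fun x hx => Finset.sum_eq_zero fun i _ => hx i⟩
  have hlt := ZMod.val_lt (r x)
  simp only [hr x hx]
  by_cases hlast : (r x).val + 1 = q
  · have hphase : r x + 1 = 0 := by
      rw [← ZMod.natCast_zmod_val (r x), ← Nat.cast_succ, Nat.succ_eq_add_one, hlast,
        ZMod.natCast_self]
    rw [hphase, ZMod.val_zero, Nat.sub_zero, hφ _ (hτ hx), show q - (r x).val = 1 by omega]
    simp
  · have hphase : (r x + 1).val = (r x).val + 1 := by
      rw [← ZMod.natCast_zmod_val (r x), ← Nat.cast_succ, ZMod.val_cast_of_lt (by simp; omega)]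
      simp
    rw [hphase, show q - (r x).val = q - ((r x).val + 1) + 1 by omega, Finset.sum_range_succ']
    simp

lemma exists_sum_iterate_eq [NeZero q] (hτ : Set.MapsTo τ A A) (hr : ∀ x ∈ A, r (τ x) = r x + 1)
    {φ : Λ → M} (hφ : ∀ x ∈ A, φ (τ x) = φ x) :
    ∃ ψ : Λ → M, (∀ x ∈ A, ∑ i ∈ Finset.range q, ψ (τ^[i] x) = φ x) ∧ ∀ x, φ x = 0 → ψ x = 0 := by
  refine ⟨fun x => if r x = 0 then φ x else 0, fun x hx => ?_, fun x hx => by simp [hx]⟩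
  have hφi : ∀ i, φ (τ^[i] x) = φ x := by
    intro i
    induction i with
    | zero => rfl
    | succ i ih => rw [Function.iterate_succ_apply', hφ _ (hτ.iterate i hx), ih]
  simp only [phase_iterate hτ hr hx, hφi]
  rw [Finset.sum_eq_single (-r x).val]
  · simp
  · intro i hi hne
    refine if_neg fun h => hne ?_
    rw [← eq_neg_of_add_eq_zero_right h, ZMod.val_cast_of_lt (Finset.mem_range.1 hi)]
  · exact fun h => absurd (Finset.mem_range.2 (ZMod.val_lt _)) h

end FreeAction

section Cochain

variable {R X : Type*} [Ring R] {q : ℕ} {g : X → X}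

lemma iterate_listMap (g : X → X) (i : ℕ) : (List.map g)^[i] = List.map g^[i] := by
  induction i with
  | zero => simp
  | succ i ih => rw [Function.iterate_succ', ih, List.map_comp_map, ← Function.iterate_succ']

lemma map_mem_degenerate (g : X → X) {l : List X} (hl : l ∈ degenerate X) :
    l.map g ∈ degenerate X := by
  refine fun h => hl ?_
  rw [List.isChain_map] at h
  exact h.imp fun a b hab e => hab (congrArg g e)

/-- Exactness of the dual of the periodic resolution on cochains, given a phase function on
vertices. -/
lemma exists_comp_cyclicDiff_eq {M : Type*} [AddCommGroup M] [Module R M] [NeZero q]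
    {r : X → ZMod q} (hr : ∀ x, r (g x) = r x + 1) {φ : OrderedChain R X →ₗ[R] M}
    (hnil : φ (Finsupp.single [] 1) = 0) {k : ℕ} (hφ : φ ∘ₗ cyclicDiff q (map g) (k + 2) = 0) :
    ∃ ψ : OrderedChain R X →ₗ[R] M, ψ ∘ₗ cyclicDiff q (map g) (k + 1) = φ ∧
      ∀ l, (∀ i, φ (Finsupp.single (l.map g^[i]) 1) = 0) → ψ (Finsupp.single l 1) = 0 := by
  have hτ : Set.MapsTo (List.map g) {l | l ≠ []} {l | l ≠ []} := fun l hl => by simpa using hl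
  have hphase : ∀ l ∈ {l : List X | l ≠ []},
      (l.map g).head?.elim 0 r = l.head?.elim 0 r + 1 := by
    rintro (_ | ⟨a, l⟩) hl
    · exact absurd rfl hl
    · exact hr a
  have hφl := fun l => LinearMap.congr_fun hφ (Finsupp.single l 1)
  by_cases hk : Even k
  · obtain ⟨ψ, hψ, hψ0⟩ := exists_sub_apply_eq hτ (r := fun l => l.head?.elim 0 r) hphase
      (φ := fun l => φ (Finsupp.single l 1)) fun l _ => by
        simpa [cyclicDiff, Nat.even_add_one, hk, map_pow, iterate_listMap] using hφl l
    simp only [iterate_listMap] at hψ0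
    refine ⟨Finsupp.linearCombination R ψ, hom_ext fun l => ?_, fun l hl => by simp [hψ0 l hl]⟩
    rcases eq_or_ne l [] with rfl | hl
    · simp [cyclicDiff, hk, hnil]
    · simpa [cyclicDiff, hk] using hψ l hl
  · obtain ⟨ψ, hψ, hψ0⟩ := exists_sum_iterate_eq hτ (r := fun l => l.head?.elim 0 r) hphase
      (φ := fun l => φ (Finsupp.single l 1)) fun l _ =>
        (sub_eq_zero.1 (by simpa [cyclicDiff, Nat.even_add_one, hk] using hφl l)).symm
    simp only [iterate_listMap] at hψ
    refine ⟨Finsupp.linearCombination R ψ, hom_ext fun l => ?_,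
      fun l hl => by simpa using hψ0 l (by simpa using hl 0)⟩
    rcases eq_or_ne l [] with rfl | hl
    · simp [cyclicDiff, hk, map_pow, hnil, hψ0]
    · simpa [cyclicDiff, hk, map_pow] using hψ l hl

/-- A cocycle that vanishes on the empty simplex and on degenerate simplices, and that is killed
by the `(k + 2)`-nd differential of the periodic resolution. -/
structure IsPeriodicCocycle (q : ℕ) (g : X → X) (k : ℕ) (φ : OrderedChain R X →ₗ[R] R) :
    Prop where
  comp_boundary : φ ∘ₗ boundary = 0
  nil : φ (Finsupp.single [] 1) = 0
  degenerate : ∀ l ∈ degenerate X, φ (Finsupp.single l 1) = 0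
  comp_cyclicDiff : φ ∘ₗ cyclicDiff q (map g) (k + 2) = 0

lemma isPeriodicCocycle_comp_boundary {ψ : OrderedChain R X →ₗ[R] R} {k : ℕ}
    (hdeg : ∀ l ∈ degenerate X, ψ (Finsupp.single l 1) = 0)
    (hcyc : ∀ c, ψ (cyclicDiff q (map g) (k + 2) (boundary c)) = 0) :
    IsPeriodicCocycle q g k (ψ ∘ₗ boundary) where
  comp_boundary := LinearMap.ext fun c => by simp [boundary_boundary]
  nil := by simp [simplexBoundary]
  degenerate l hl := by
    rw [LinearMap.comp_apply, boundary_single_one]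
    exact apply_eq_of_mem_supported (Ψ := 0) hdeg (simplexBoundary_mem_supported_degenerate hl)
  comp_cyclicDiff := LinearMap.ext fun c => by simp [boundary_cyclicDiff_map, hcyc]

lemma isPeriodicCocycle_zero [CharP R q] (g : X → X) :
    IsPeriodicCocycle q g 0 (Finsupp.lapply [] ∘ₗ boundary (R := R)) := by
  refine isPeriodicCocycle_comp_boundary (fun l hl => ?_) fun c => ?_
  · have : l ≠ [] := by
      rintro rfl
      exact hl List.isChain_nil
    simp [this]
  · have hmap : Finsupp.lapply [] ∘ₗ map g = Finsupp.lapply (R := R) (M := R) ([] : List X) :=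
      hom_ext fun l => by cases l <;> simp
    rw [map_cyclicDiff_apply (W := ⊤) (γ' := 1) (by simp)
      (fun c _ => LinearMap.congr_fun hmap c) q 2 trivial]
    simp [cyclicDiff, CharP.cast_eq_zero]

lemma IsPeriodicCocycle.exists_succ [NeZero q] {r : X → ZMod q} (hr : ∀ x, r (g x) = r x + 1)
    {k : ℕ} {φ : OrderedChain R X →ₗ[R] R} (hφ : IsPeriodicCocycle q g k φ) :
    ∃ ψ : OrderedChain R X →ₗ[R] R, ψ ∘ₗ cyclicDiff q (map g) (k + 1) = φ ∧
      IsPeriodicCocycle q g (k + 1) (ψ ∘ₗ boundary) := by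
  obtain ⟨ψ, hψφ, hψ⟩ := exists_comp_cyclicDiff_eq hr hφ.nil hφ.comp_cyclicDiff
  refine ⟨ψ, hψφ, isPeriodicCocycle_comp_boundary
    (fun l hl => hψ l fun i => hφ.degenerate _ (map_mem_degenerate _ hl)) fun c => ?_⟩
  rw [cyclicDiff_add_three, ← LinearMap.comp_apply, hψφ, ← LinearMap.comp_apply,
    hφ.comp_boundary, LinearMap.zero_apply]

end Cochain

/-! ### Chains realizing the periodic resolution -/

section Tower

variable {R X Y : Type*} [Ring R] {q n : ℕ} {g : X → X} {A : Set (List X)}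
  {z : ℕ → OrderedChain R X}

/-- Chains `z 0, …, z n` in `A`, where `z k` is spanned by simplices with `k` vertices, whose
boundaries are given by the differentials of the periodic resolution. -/
structure IsCyclicTower (q : ℕ) (g : X → X) (A : Set (List X)) (n : ℕ)
    (z : ℕ → OrderedChain R X) : Prop where
  zero : z 0 = Finsupp.single [] 1
  mem : ∀ k ≤ n, z k ∈ Finsupp.supported R R (A ∩ {l | l.length = k})
  boundary : ∀ k < n, boundary (z (k + 1)) = cyclicDiff q (map g) k (z k)

lemma IsCyclicTower.exists_isPeriodicCocycle [NeZero q] [CharP R q] (hz : IsCyclicTower q g A n z)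
    {r : X → ZMod q} (hr : ∀ x, r (g x) = r x + 1) (k : ℕ) (hk : k < n) :
    ∃ φ : OrderedChain R X →ₗ[R] R, IsPeriodicCocycle q g k φ ∧ φ (z (k + 1)) = 1 := by
  induction k with
  | zero =>
    exact ⟨_, isPeriodicCocycle_zero g, by simp [hz.boundary 0 hk, hz.zero, cyclicDiff]⟩
  | succ k ih =>
    obtain ⟨φ, hφ, hφz⟩ := ih (by omega)
    obtain ⟨ψ, hψφ, hψ⟩ := hφ.exists_succ hr
    refine ⟨_, hψ, ?_⟩
    rw [LinearMap.comp_apply, hz.boundary _ hk, ← LinearMap.comp_apply, hψφ, hφz]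

lemma IsCyclicTower.exists_isChain_ne [NeZero q] [CharP R q] [Nontrivial R]
    (hz : IsCyclicTower q g A (n + 1) z) {r : X → ZMod q} (hr : ∀ x, r (g x) = r x + 1) :
    ∃ l ∈ A, l.length = n + 1 ∧ l.IsChain (· ≠ ·) := by
  obtain ⟨φ, hφ, hφz⟩ := hz.exists_isPeriodicCocycle hr n n.lt_succ_self
  by_contra! hno
  have hzero : φ (z (n + 1)) = 0 :=
    apply_eq_of_mem_supported (Ψ := 0) (fun l hl => hφ.degenerate l (hno l hl.1 hl.2))
      (hz.mem _ le_rfl)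
  exact one_ne_zero (hφz.symm.trans hzero)

lemma IsCyclicTower.exists_ne_nil [Nontrivial R] (hz : IsCyclicTower q g A (n + 1) z) :
    ∃ l ∈ A, l ≠ [] := by
  by_contra! hnil
  have hempty : A ∩ {l | l.length = 1} = ∅ := by
    ext l
    simpa using fun hl => by simp [hnil l hl]
  have hz1 := hz.mem 1 (by omega)
  rw [hempty, Finsupp.supported_empty, Submodule.mem_bot] at hz1
  have hzero : (Finsupp.single [] 1 : OrderedChain R X) = 0 := by
    simpa [hz1, hz.zero, cyclicDiff] using (hz.boundary 0 (by omega)).symm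
  exact Finsupp.single_ne_zero.2 one_ne_zero hzero

lemma IsCyclicTower.subdivide {b : List X → Y} {g' : Y → Y} {B : Set (List Y)}
    (hz : IsCyclicTower q g A n z) (hA : IsSubcomplex A) (hg : ∀ l ∈ A, l.map g ∈ A)
    (hb : ∀ l ∈ A, l ≠ [] → b (l.map g) = g' (b l))
    (hB : ∀ l ∈ A, subdivide b (Finsupp.single l (1 : R)) ∈ Finsupp.supported R R B) :
    IsCyclicTower q g' B n fun k => subdivide b (z k) where
  zero := by rw [hz.zero, subdivide_nil]
  mem k hk := by
    refine apply_mem_of_mem_supported (fun l hl => ?_) (hz.mem k hk)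
    rw [Finsupp.supported_inter, ← hl.2]
    exact ⟨hB l hl.1, subdivide_single_mem_supported_length b l⟩
  boundary k hk := by
    rw [boundary_subdivide, hz.boundary k hk]
    refine map_cyclicDiff_apply (W := Finsupp.supported R R A) ?_ ?_ q k ?_
    · exact fun c hc => map_mem_supported hg hc
    · exact fun c hc => subdivide_map hA hb hc
    · exact Finsupp.supported_mono Set.inter_subset_left (hz.mem k hk.le)

/-- The iterated cones that realize the periodic resolution on the join of the orbits of
`v 0, v 1, …`. -/
def cyclicTower (q : ℕ) (g : X → X) (v : ℕ → X) : ℕ → OrderedChain R X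
  | 0 => Finsupp.single [] 1
  | k + 1 => cone (v k) (cyclicDiff q (map g) k (cyclicTower q g v k))

lemma boundary_cyclicTower (hg : g^[q] = id) (v : ℕ → X) (k : ℕ) :
    boundary (cyclicTower q g v (k + 1) : OrderedChain R X) =
      cyclicDiff q (map (R := R) g) k (cyclicTower q g v k) := by
  suffices h : cyclicDiff q (map g) k (boundary (cyclicTower q g v k : OrderedChain R X)) = 0 by
    rw [cyclicTower, boundary_cone, boundary_cyclicDiff_map, h, map_zero, sub_zero]
  match k with
  | 0 => simp [cyclicTower, cyclicDiff, simplexBoundary]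
  | 1 => simp [boundary_cyclicTower hg v 0, cyclicDiff, cyclicTower.eq_1]
  | k + 2 =>
    have hpow : (map g : Module.End R (OrderedChain R X)) ^ q = 1 := by
      rw [map_pow, hg]
      exact hom_ext fun l => by simp
    rw [boundary_cyclicTower hg v (k + 1), ← Module.End.mul_apply, cyclicDiff_mul_cyclicDiff hpow,
      LinearMap.zero_apply]

lemma cyclicTower_mem_supported (q : ℕ) (g : X → X) (v : ℕ → X) (k : ℕ) :
    (cyclicTower q g v k : OrderedChain R X) ∈ Finsupp.supported R R
      (Set.range fun c : ℕ → ℕ => (List.range k).reverse.map fun j => g^[c j] (v j)) := by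
  induction k with
  | zero => exact Finsupp.single_mem_supported R 1 ⟨0, rfl⟩
  | succ k ih =>
    refine cone_mem_supported ?_ (cyclicDiff_apply_mem (fun c hc => map_mem_supported ?_ hc) q k ih)
    · rintro _ ⟨c, rfl⟩
      refine ⟨Function.update c k 0, ?_⟩
      simp only [List.range_succ, List.reverse_append, List.reverse_singleton,
        List.singleton_append, List.map_cons, Function.update_self, Function.iterate_zero, id_eq]
      congr 1
      refine List.map_congr_left fun j hj => ?_
      rw [Function.update_of_ne (List.mem_range.1 (List.mem_reverse.1 hj)).ne]
    · rintro _ ⟨c, rfl⟩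
      exact ⟨fun j => c j + 1, by simp [Function.iterate_succ_apply']⟩

lemma isCyclicTower_cyclicTower (hg : g^[q] = id) {v : ℕ → X}
    (hA : ∀ k ≤ n, ∀ c : ℕ → ℕ, ((List.range k).reverse.map fun j => g^[c j] (v j)) ∈ A) :
    IsCyclicTower q g A n (cyclicTower q g v : ℕ → OrderedChain R X) where
  zero := rfl
  mem k hk := by
    refine Finsupp.supported_mono ?_ (cyclicTower_mem_supported q g v k)
    rintro _ ⟨c, rfl⟩
    exact ⟨hA k hk c, by simp⟩
  boundary k _ := boundary_cyclicTower hg v k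

end Tower

end Cyclic

end OrderedChain

/-! ### Joins of boundaries of simplices -/

section JoinFace

open scoped Pointwise

variable {q : ℕ} [NeZero q] {κ : Type*}

/-- The family `A` of subsets of `ZMod q` is a nonempty face of the join of copies, indexed by `κ`,
of the boundary of the simplex with vertex set `ZMod q`. -/
def IsJoinFace (A : κ → Finset (ZMod q)) : Prop :=
  (∀ k, A k ≠ Finset.univ) ∧ ∃ k, (A k).Nonempty

lemma IsJoinFace.vadd {A : κ → Finset (ZMod q)} (hA : IsJoinFace A) (i : ZMod q) :
    IsJoinFace (i +ᵥ A) := by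
  refine ⟨fun k hk => hA.1 k ?_, ?_⟩
  · rwa [Pi.vadd_apply, ← Finset.vadd_finset_univ (a := i), vadd_left_cancel_iff] at hk
  · obtain ⟨k, hk⟩ := hA.2
    exact ⟨k, hk.vadd_finset⟩

/-- The nonempty faces of the join, ordered by inclusion. -/
abbrev JoinFace (q : ℕ) [NeZero q] (κ : Type*) : Type _ := {A : κ → Finset (ZMod q) // IsJoinFace A}

/-- The cyclic shift of a face. -/
def JoinFace.shift (A : JoinFace q κ) : JoinFace q κ := ⟨(1 : ZMod q) +ᵥ A.1, A.2.vadd 1⟩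

lemma mean_vadd [Fact q.Prime] {s : Finset (ZMod q)} (hs : s.Nonempty) (hs' : s ≠ Finset.univ)
    (i : ZMod q) :
    (∑ j ∈ i +ᵥ s, j) / ((i +ᵥ s).card : ZMod q) = (∑ j ∈ s, j) / (s.card : ZMod q) + i := by
  have hcard : (s.card : ZMod q) ≠ 0 := by
    rw [Ne, ZMod.natCast_eq_zero_iff]
    refine Nat.not_dvd_of_pos_of_lt hs.card_pos ?_
    simpa using (Finset.card_lt_iff_ne_univ s).2 hs'
  have hsum : ∑ j ∈ i +ᵥ s, j = s.card * i + ∑ j ∈ s, j :=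
    calc ∑ j ∈ i +ᵥ s, j = ∑ j ∈ s, (i + j) := Finset.sum_image fun _ _ _ _ h => add_left_cancel h
      _ = s.card * i + ∑ j ∈ s, j := by
        rw [Finset.sum_add_distrib, Finset.sum_const, nsmul_eq_mul]
  rw [Finset.card_vadd_finset, hsum]
  field_simp
  ring

/-- For prime `q` the cyclic shift acts freely on the faces, as witnessed by the mean of a
nonempty block whose index depends only on the set of all such indices. -/
lemma JoinFace.exists_phase [Fact q.Prime] (κ : Type*) :
    ∃ r : JoinFace q κ → ZMod q, ∀ A, r A.shift = r A + 1 := by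
  let block (A : JoinFace q κ) : κ := Set.Nonempty.some (s := {k | (A.1 k).Nonempty}) A.2.2
  have hblock (A : JoinFace q κ) : block A.shift = block A := by
    have hset : {k | (A.shift.1 k).Nonempty} = {k | (A.1 k).Nonempty} := by simp [JoinFace.shift]
    simp only [block, hset]
  refine ⟨fun A => (∑ j ∈ A.1 (block A), j) / ((A.1 (block A)).card : ZMod q), fun A => ?_⟩
  simp only [hblock]
  exact mean_vadd (Set.Nonempty.some_mem (s := {k | (A.1 k).Nonempty}) A.2.2) (A.2.1 _) 1

variable [Fintype κ]

/-- The number of vertices of a face. -/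
def JoinFace.card (A : JoinFace q κ) : ℕ := ∑ k, (A.1 k).card

lemma JoinFace.card_strictMono : StrictMono (JoinFace.card : JoinFace q κ → ℕ) := by
  intro A B h
  obtain ⟨hle, k, hk⟩ := Pi.lt_def.1 (show A.1 < B.1 from h)
  exact Finset.sum_lt_sum (fun i _ => Finset.card_le_card (hle i))
    ⟨k, Finset.mem_univ k, Finset.card_lt_card hk⟩

lemma JoinFace.card_pos (A : JoinFace q κ) : 0 < A.card := by
  obtain ⟨k, hk⟩ := A.2.2
  exact Finset.sum_pos' (fun _ _ => Nat.zero_le _) ⟨k, Finset.mem_univ k, hk.card_pos⟩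

lemma JoinFace.card_le (A : JoinFace q κ) : A.card ≤ Fintype.card κ * (q - 1) := by
  refine Finset.sum_le_card_nsmul _ _ _ fun k _ => Nat.le_sub_one_of_lt ?_
  simpa using (Finset.card_lt_iff_ne_univ _).2 (A.2.1 k)

end JoinFace

lemma length_le_of_pairwise_ge {α : Type*} [PartialOrder α] {rank : α → ℕ} (hrank : StrictMono rank)
    {N : ℕ} (hN : ∀ a, rank a ∈ Finset.Icc 1 N) {l : List α} (hge : l.Pairwise (· ≥ ·))
    (hne : l.IsChain (· ≠ ·)) : l.length ≤ N := by
  have hgt : l.Pairwise (· > ·) := by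
    rw [← List.isChain_iff_pairwise] at hge ⊢
    rw [List.isChain_iff_getElem] at hge hne ⊢
    exact fun i hi => lt_of_le_of_ne (hge i hi) (hne i hi).symm
  have hnodup : (l.map rank).Nodup :=
    List.pairwise_map.2 (hgt.imp fun h => (hrank h).ne')
  have hsub : (l.map rank).toFinset ⊆ Finset.Icc 1 N := by
    intro n hn
    obtain ⟨a, -, rfl⟩ := List.mem_map.1 (List.mem_toFinset.1 hn)
    exact hN a
  simpa [List.toFinset_card_of_nodup hnodup] using Finset.card_le_card hsub

/-! ### Barycentric subdivision -/

section Barycenter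

/-- The barycenter of a list of points, with junk value `0` for the empty list. -/
def barycenter {E : Type*} [AddCommGroup E] [Module ℝ E] (l : List E) : E :=
  (l.length : ℝ)⁻¹ • l.sum

lemma barycenter_map {E F : Type*} [AddCommGroup E] [Module ℝ E] [AddCommGroup F] [Module ℝ F]
    (g : E →ₗ[ℝ] F) (l : List E) : barycenter (l.map g) = g (barycenter l) := by
  simp [barycenter, map_list_sum]

lemma barycenter_eq_sum {E : Type*} [AddCommGroup E] [Module ℝ E] (l : List E) :
    barycenter l = ∑ i : Fin l.length, (l.length : ℝ)⁻¹ • l[i] := by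
  rw [barycenter, ← Finset.smul_sum]
  exact congrArg _ (Fin.sum_univ_getElem l).symm

lemma barycenter_mem_convexHull {E : Type*} [AddCommGroup E] [Module ℝ E] {l : List E}
    (hl : l ≠ []) : barycenter l ∈ convexHull ℝ {x | x ∈ l} := by
  rw [barycenter_eq_sum]
  refine (convex_convexHull ℝ _).sum_mem (fun _ _ => by positivity) ?_ fun i _ => ?_
  · simp [hl]
  · exact subset_convexHull ℝ _ (List.getElem_mem _)

variable {E : Type*} [NormedAddCommGroup E] [NormedSpace ℝ E]

lemma dist_barycenter_le_of_mem {l : List E} {x : E} (hx : x ∈ l) {D : ℝ}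
    (hD : ∀ y ∈ l, dist y x ≤ D) :
    dist (barycenter l) x ≤ (l.length : ℝ)⁻¹ * ((l.length - 1) * D) := by
  obtain ⟨i, hi, rfl⟩ := List.getElem_of_mem hx
  have hpos : (l.length : ℝ) ≠ 0 := Nat.cast_ne_zero.2 (by omega)
  have hdiff : barycenter l - l[i] = (l.length : ℝ)⁻¹ • ∑ j : Fin l.length, (l[j] - l[i]) := by
    rw [barycenter_eq_sum, ← Finset.smul_sum, Finset.sum_sub_distrib, smul_sub]
    simp [← Nat.cast_smul_eq_nsmul ℝ, smul_smul, hpos]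
  rw [dist_eq_norm, hdiff, norm_smul, Real.norm_of_nonneg (by positivity)]
  gcongr
  calc ‖∑ j : Fin l.length, (l[j] - l[i])‖
      = ‖∑ j ∈ Finset.univ.erase (⟨i, hi⟩ : Fin l.length), (l[j] - l[i])‖ := by
        rw [Finset.sum_erase _ (sub_self _)]
    _ ≤ ∑ _j ∈ Finset.univ.erase (⟨i, hi⟩ : Fin l.length), D :=
        norm_sum_le_of_le _ fun j _ => (dist_eq_norm l[j] l[i]).symm.trans_le
          (hD _ (List.getElem_mem _))
    _ = (l.length - 1) * D := by
        rw [Finset.sum_const, Finset.card_erase_of_mem (Finset.mem_univ _), Finset.card_univ,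
          Fintype.card_fin, nsmul_eq_mul, Nat.cast_sub (by omega), Nat.cast_one]

lemma dist_barycenter_le {l : List E} {n : ℕ} (hn : l.length ≤ n + 1) {D : ℝ}
    (hD : ∀ x ∈ l, ∀ y ∈ l, dist x y ≤ D) {x : E} (hx : x ∈ convexHull ℝ {x | x ∈ l}) :
    dist (barycenter l) x ≤ n / (n + 1) * D := by
  suffices h : {x | x ∈ l} ⊆ Metric.closedBall (barycenter l) (n / (n + 1) * D) from
    Metric.mem_closedBall'.1 (convexHull_min h (convex_closedBall _ _) hx)
  intro v hv
  have hD0 : 0 ≤ D := dist_nonneg.trans (hD v hv v hv)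
  have hpos : (0 : ℝ) < l.length := Nat.cast_pos.2 (List.length_pos_of_mem hv)
  have hn' : (l.length : ℝ) ≤ n + 1 := by exact_mod_cast hn
  refine Metric.mem_closedBall'.2
    ((dist_barycenter_le_of_mem hv fun y hy => hD y hy v hv).trans ?_)
  rw [← mul_assoc]
  gcongr
  rw [inv_mul_eq_div, div_le_div_iff₀ hpos (by positivity)]
  linarith

end Barycenter

namespace OrderedChain

section FineSimplices

variable {E ι : Type*} [NormedAddCommGroup E] {C : ι → Set E} {n : ℕ} {D : ℝ}

/-- The ordered simplices of dimension at most `n` whose vertices lie in a common cell of the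
family `C` and have mutual distances at most `D`. -/
def fineSimplices {E ι : Type*} [Dist E] (C : ι → Set E) (n : ℕ) (D : ℝ) : Set (List E) :=
  {l | l.length ≤ n + 1 ∧ (∃ c, ∀ x ∈ l, x ∈ C c) ∧ ∀ x ∈ l, ∀ y ∈ l, dist x y ≤ D}

lemma isSubcomplex_fineSimplices : IsSubcomplex (fineSimplices C n D) := by
  rintro l ⟨hlen, ⟨c, hc⟩, hD⟩ m ⟨hm, -⟩
  exact ⟨hm.length_le.trans hlen, ⟨c, fun x hx => hc x (hm.subset hx)⟩,
    fun x hx y hy => hD x (hm.subset hx) y (hm.subset hy)⟩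

lemma map_mem_fineSimplices {g : E → E} (hg : LipschitzWith 1 g)
    (hgC : ∀ c, ∃ c', Set.MapsTo g (C c) (C c')) {l : List E} (hl : l ∈ fineSimplices C n D) :
    l.map g ∈ fineSimplices C n D := by
  obtain ⟨hlen, ⟨c, hc⟩, hD⟩ := hl
  obtain ⟨c', hc'⟩ := hgC c
  refine ⟨by simpa, ⟨c', List.forall_mem_map.2 fun x hx => hc' (hc x hx)⟩, ?_⟩
  refine List.forall_mem_map.2 fun x hx => List.forall_mem_map.2 fun y hy => ?_
  exact (hg.dist_le_mul x y).trans (by simpa using hD x hx y hy)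

variable [NormedSpace ℝ E]

lemma subdivide_barycenter_mem_supported {R : Type*} [Ring R] (hC : ∀ c, Convex ℝ (C c))
    {l : List E} (hl : l ∈ fineSimplices C n D) :
    subdivide barycenter (Finsupp.single l (1 : R)) ∈
      Finsupp.supported R R (fineSimplices C n (n / (n + 1) * D)) := by
  have hlen := subdivide_single_mem_supported_length (R := R) barycenter l
  have hpair := subdivide_single_mem_supported_pairwise (R := R) (b := barycenter)
    (A := fineSimplices C n D) (H := fun l => convexHull ℝ {x | x ∈ l})
    (S := fun x y => dist x y ≤ n / (n + 1) * D) isSubcomplex_fineSimplices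
    (fun l _ h => barycenter_mem_convexHull h)
    (fun l m hm => convexHull_mono fun x hx => hm.1.subset hx)
    (fun l hl _ y hy => dist_barycenter_le hl.1 hl.2.2 hy) hl
  refine Finsupp.supported_mono ?_ ((Finsupp.supported_inter (R := R) _ _).ge ⟨hlen, hpair⟩)
  rintro s ⟨hslen, hsl, hs⟩
  obtain ⟨hl1, ⟨c, hc⟩, hD⟩ := hl
  refine ⟨hslen.trans_le hl1, ⟨c, fun x hx => convexHull_min hc (hC c) (hsl x hx)⟩,
    fun x hx y hy => hs.forall_of_forall_of_flip (fun x hx => ?_) (hs.imp fun h => ?_) hx hy⟩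
  · obtain ⟨v, hv⟩ := convexHull_nonempty_iff.1 ⟨x, hsl x hx⟩
    have hD0 : 0 ≤ D := dist_nonneg.trans (hD v hv v hv)
    rw [dist_self]
    positivity
  · rwa [flip, dist_comm]

lemma IsCyclicTower.exists_fine {R : Type*} [Ring R] {q m : ℕ} {g : E →ₗ[ℝ] E}
    {z : ℕ → OrderedChain R E} (hz : IsCyclicTower q g (fineSimplices C n D) m z)
    (hC : ∀ c, Convex ℝ (C c)) (hg : LipschitzWith 1 g)
    (hgC : ∀ c, ∃ c', Set.MapsTo g (C c) (C c')) {δ : ℝ} (hδ : 0 < δ) :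
    ∃ z' : ℕ → OrderedChain R E, IsCyclicTower q g (fineSimplices C n δ) m z' := by
  have hiterate (i : ℕ) : ∃ z' : ℕ → OrderedChain R E,
      IsCyclicTower q g (fineSimplices C n ((n / (n + 1) : ℝ) ^ i * D)) m z' := by
    induction i with
    | zero => exact ⟨z, by simpa using hz⟩
    | succ i ih =>
      obtain ⟨z', hz'⟩ := ih
      rw [pow_succ', mul_assoc]
      exact ⟨_, hz'.subdivide isSubcomplex_fineSimplices
        (fun l => map_mem_fineSimplices hg hgC) (fun l _ _ => barycenter_map g l)
        (fun l => subdivide_barycenter_mem_supported hC)⟩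
  have hratio : (n / (n + 1) : ℝ) < 1 := by
    rw [div_lt_one (by positivity)]
    linarith
  have hlim := (tendsto_pow_atTop_nhds_zero_of_lt_one (by positivity) hratio).mul_const D
  rw [zero_mul] at hlim
  obtain ⟨i, hi⟩ := (hlim.eventually (gt_mem_nhds hδ)).exists
  obtain ⟨z', hz'⟩ := hiterate i
  refine ⟨z', hz'.zero, fun k hk => Finsupp.supported_mono ?_ (hz'.mem k hk), hz'.boundary⟩
  rintro l ⟨⟨hlen, hcell, hdist⟩, hk⟩
  exact ⟨⟨hlen, hcell, fun x hx y hy => (hdist x hx y hy).trans hi.le⟩, hk⟩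

end FineSimplices

end OrderedChain

/-! ### Coincidences on joins -/

section Peaks

open scoped Pointwise

variable {X κ : Type*} {q : ℕ} [NeZero q] {F : X → ZMod q → κ → ℝ} {ε : ℝ}

/-- The indices at which the coordinate `k` of `F` is maximal over some vertex of `l`, exceeding
its value at another index by at least `ε`. -/
def peaks (F : X → ZMod q → κ → ℝ) (ε : ℝ) (l : List X) : κ → Finset (ZMod q) :=
  open Classical in fun k =>
    {i | ∃ y ∈ l, (∀ i', F y i' k ≤ F y i k) ∧ ∃ i', F y i' k + ε ≤ F y i k}

lemma mem_peaks {l : List X} {k : κ} {i : ZMod q} :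
    i ∈ peaks F ε l k ↔ ∃ y ∈ l, (∀ i', F y i' k ≤ F y i k) ∧ ∃ i', F y i' k + ε ≤ F y i k := by
  simp [peaks]

lemma peaks_mono {l m : List X} (h : m ⊆ l) : peaks F ε m ≤ peaks F ε l := by
  intro k i hi
  obtain ⟨y, hy, hpeak⟩ := mem_peaks.1 hi
  exact mem_peaks.2 ⟨y, h hy, hpeak⟩

lemma peaks_map {g : X → X} (hF : ∀ y i, F (g y) i = F y (i - 1)) (l : List X) :
    peaks F ε (l.map g) = (1 : ZMod q) +ᵥ peaks F ε l := by
  funext k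
  ext i
  rw [Pi.vadd_apply, ← Finset.neg_vadd_mem_iff, vadd_eq_add, neg_add_eq_sub]
  simp only [mem_peaks, List.mem_map, exists_exists_and_eq_and, hF]
  refine exists_congr fun y => and_congr_right fun _ => and_congr ?_ ?_
  · exact (Equiv.subRight (1 : ZMod q)).forall_congr_right (q := fun j => F y j k ≤ F y (i - 1) k)
  · exact (Equiv.subRight (1 : ZMod q)).exists_congr_right
      (q := fun j => F y j k + ε ≤ F y (i - 1) k)

lemma isJoinFace_peaks {l : List X} (hne : l ≠ [])
    (hspread : ∀ y ∈ l, ∃ i i' k, F y i' k + ε ≤ F y i k)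
    (hclose : ∀ x ∈ l, ∀ y ∈ l, ∀ i k, |F x i k - F y i k| < ε / 2) :
    IsJoinFace (peaks F ε l) := by
  constructor
  · intro k hk
    have hall : ∀ i, i ∈ peaks F ε l k := fun i => hk ▸ Finset.mem_univ i
    obtain ⟨y, hy, -, i, hi⟩ := mem_peaks.1 (hall 0)
    obtain ⟨x, hx, hmax, -⟩ := mem_peaks.1 (hall i)
    linarith [hmax 0, (abs_lt.1 (hclose x hx y hy 0 k)).1, (abs_lt.1 (hclose x hx y hy i k)).2]
  · obtain ⟨y, hy⟩ := List.exists_mem_of_ne_nil l hne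
    obtain ⟨i, i', k, h⟩ := hspread y hy
    obtain ⟨j, hj⟩ := Finite.exists_max fun i => F y i k
    exact ⟨k, j, mem_peaks.2 ⟨y, hy, hj, i', h.trans (hj i)⟩⟩

lemma exists_forall_add_le_of_isCompact {X I κ : Type*} [TopologicalSpace X] [Finite I]
    [Finite κ] {K : Set X} (hK : IsCompact K) {F : X → I → κ → ℝ} (hF : Continuous F)
    (hne : ∀ y ∈ K, ∃ i i', F y i ≠ F y i') :
    ∃ ε > 0, ∀ y ∈ K, ∃ i i' k, F y i' k + ε ≤ F y i k := by
  have := Fintype.ofFinite I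
  have := Fintype.ofFinite κ
  let spread (y : X) : ℝ := dist (fun p : I × I => F y p.1) fun p => F y p.2
  have hcont : Continuous spread := by fun_prop
  have hpos : ∀ y ∈ K, 0 < spread y := by
    intro y hy
    obtain ⟨i, i', h⟩ := hne y hy
    exact dist_pos.2 fun heq => h (congr_fun heq (i, i'))
  obtain ⟨ε, hε, hle⟩ := hK.exists_forall_le' hcont.continuousOn hpos
  refine ⟨ε, hε, fun y hy => ?_⟩
  by_contra! hno
  refine (hle y hy).not_gt ((dist_pi_lt_iff hε).2 fun p => (dist_pi_lt_iff hε).2 fun k => ?_)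
  rw [Real.dist_eq, abs_lt]
  constructor <;> linarith [hno p.1 p.2 k, hno p.2 p.1 k]

lemma exists_isJoinFace_peaks [PseudoMetricSpace X] [Finite κ] {K : Set X} (hK : IsCompact K)
    (hF : Continuous F) (hne : ∀ y ∈ K, ∃ i i', F y i ≠ F y i') :
    ∃ ε : ℝ, ∃ δ > 0, ∀ l : List X, l ≠ [] → (∀ x ∈ l, x ∈ K) →
      (∀ x ∈ l, ∀ y ∈ l, dist x y ≤ δ) → IsJoinFace (peaks F ε l) := by
  have := Fintype.ofFinite κ
  obtain ⟨ε, hε, hspread⟩ := exists_forall_add_le_of_isCompact hK hF hne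
  obtain ⟨δ, hδ, hclose⟩ := Metric.uniformContinuousOn_iff_le.1
    (hK.uniformContinuousOn_of_continuous hF.continuousOn) (ε / 3) (by positivity)
  refine ⟨ε, δ, hδ, fun l hl hlK hdist =>
    isJoinFace_peaks hl (fun y hy => hspread y (hlK y hy)) fun x hx y hy i k => ?_⟩
  calc |F x i k - F y i k| ≤ dist (F x) (F y) :=
        (dist_le_pi_dist (F x i) (F y i) k).trans (dist_le_pi_dist (F x) (F y) i)
    _ ≤ ε / 3 := hclose x (hlK x hx) y (hlK y hy) (hdist x hx y hy)
    _ < ε / 2 := by linarith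

/-- Subdividing along the peaks produces a nondegenerate chain of faces of the join whose length
is bounded by the dimension of the join. -/
lemma OrderedChain.IsCyclicTower.le_of_isJoinFace_peaks [Fact q.Prime] [Fintype κ] {g : X → X}
    {A : Set (List X)} {n : ℕ} {z : ℕ → OrderedChain (ZMod q) X}
    (hz : IsCyclicTower q g A (n + 1) z) (hA : IsSubcomplex A) (hg : ∀ l ∈ A, l.map g ∈ A)
    (hF : ∀ y i, F (g y) i = F y (i - 1))
    (hpeaks : ∀ l ∈ A, l ≠ [] → IsJoinFace (peaks F ε l)) :
    n + 1 ≤ Fintype.card κ * (q - 1) := by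
  obtain ⟨l₀, hl₀, hne₀⟩ := hz.exists_ne_nil
  have : Nonempty (JoinFace q κ) := ⟨⟨_, hpeaks l₀ hl₀ hne₀⟩⟩
  have hexists : ∀ l ∈ A, l ≠ [] → ∃ B : JoinFace q κ, B.1 = peaks F ε l :=
    fun l hl hne => ⟨⟨_, hpeaks l hl hne⟩, rfl⟩
  choose! b hb using hexists
  have hshift : ∀ l ∈ A, l ≠ [] → b (l.map g) = (b l).shift := fun l hl hne =>
    Subtype.ext <| by
      rw [hb _ (hg l hl) (by simpa), peaks_map hF, ← hb l hl hne, JoinFace.shift]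
  have hanti : ∀ l ∈ A, OrderedChain.subdivide b (Finsupp.single l (1 : ZMod q)) ∈
      Finsupp.supported (ZMod q) (ZMod q) {s | s.Pairwise (· ≥ ·)} := fun l hl =>
    Finsupp.supported_mono (fun _ hs => hs.2) <|
      OrderedChain.subdivide_single_mem_supported_pairwise (H := fun l => {B | B.1 ≤ peaks F ε l})
        (S := (· ≥ ·)) hA
        (fun l hl hne => (hb l hl hne).le)
        (fun l m hm B hB => le_trans hB (peaks_mono hm.1.subset))
        (fun l hl hne B hB => Subtype.coe_le_coe.1 (hB.trans_eq (hb l hl hne).symm)) hl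
  obtain ⟨r, hr⟩ := JoinFace.exists_phase (q := q) κ
  obtain ⟨s, hs, hlen, hchain⟩ := (hz.subdivide hA hg hshift hanti).exists_isChain_ne hr
  rw [← hlen]
  exact length_le_of_pairwise_ge JoinFace.card_strictMono
    (fun B => Finset.mem_Icc.2 ⟨B.card_pos, B.card_le⟩) hs hchain

end Peaks

section Join

variable {q n : ℕ} {ι : Type*} [Fintype ι]

/-- The cyclic shift on the space `ZMod q × ι → ℝ`, which contains the join of copies of `ZMod q`
indexed by `ι`. -/
def joinShift (q : ℕ) (ι : Type*) : (ZMod q × ι → ℝ) →ₗ[ℝ] (ZMod q × ι → ℝ) :=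
  LinearMap.funLeft ℝ ℝ fun p => (p.1 - 1, p.2)

lemma joinShift_apply {q : ℕ} {ι : Type*} (y : ZMod q × ι → ℝ) (p : ZMod q × ι) :
    joinShift q ι y p = y (p.1 - 1, p.2) := rfl

lemma joinShift_iterate_apply {q : ℕ} {ι : Type*} (m : ℕ) (y : ZMod q × ι → ℝ) (p : ZMod q × ι) :
    (joinShift q ι)^[m] y p = y (p.1 - m, p.2) := by
  induction m generalizing y with
  | zero => simp
  | succ m ih =>
    rw [Function.iterate_succ_apply, ih, joinShift_apply, Nat.cast_succ, sub_sub]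

lemma joinShift_iterate_eq_id (q : ℕ) (ι : Type*) : (joinShift q ι)^[q] = id := by
  ext y p
  simp [joinShift_iterate_apply]

variable [NeZero q]

lemma lipschitzWith_joinShift : LipschitzWith 1 (joinShift q ι) :=
  LipschitzWith.of_dist_le_mul fun x y => by
    rw [NNReal.coe_one, one_mul, dist_pi_le_iff dist_nonneg]
    exact fun p => dist_le_pi_dist x y _

/-- The maximal simplex of the join of copies of `ZMod q` that uses the vertex `c j` of the
`j`-th copy. -/
def joinCell (c : ι → ZMod q) : Set (ZMod q × ι → ℝ) :=
  {y ∈ stdSimplex ℝ (ZMod q × ι) | ∀ p, c p.2 ≠ p.1 → y p = 0}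

lemma convex_joinCell (c : ι → ZMod q) : Convex ℝ (joinCell c) := by
  refine (convex_stdSimplex ℝ _).inter fun x hx y hy a b _ _ _ p hp => ?_
  simp [hx p hp, hy p hp]

lemma isCompact_joinCell (c : ι → ZMod q) : IsCompact (joinCell c) := by
  refine (isCompact_stdSimplex ℝ _).inter_right
    (t := {y | ∀ p : ZMod q × ι, c p.2 ≠ p.1 → y p = 0}) ?_
  simp only [Set.ofPred_forall]
  exact isClosed_iInter fun p => isClosed_iInter fun _ =>
    isClosed_eq (continuous_apply p) continuous_const

lemma dist_le_one_of_mem_stdSimplex {J : Type*} [Fintype J] {x y : J → ℝ} (hx : x ∈ stdSimplex ℝ J)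
    (hy : y ∈ stdSimplex ℝ J) : dist x y ≤ 1 :=
  (dist_pi_le_iff zero_le_one).2 fun j => by
    simpa using Real.dist_le_of_mem_Icc (mem_Icc_of_mem_stdSimplex hx j)
      (mem_Icc_of_mem_stdSimplex hy j)

lemma mapsTo_joinShift_joinCell (c : ι → ZMod q) :
    Set.MapsTo (joinShift q ι) (joinCell c) (joinCell (c + 1)) := by
  rintro y ⟨⟨hnonneg, hsum⟩, hc⟩
  refine ⟨⟨fun p => hnonneg _, ?_⟩, fun p hp => hc _ fun h => hp ?_⟩
  · rw [← hsum]
    exact ((Equiv.subRight (1 : ZMod q)).prodCongr (Equiv.refl ι)).sum_comp y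
  · rw [Pi.add_apply, h, Pi.one_apply, sub_add_cancel]

variable [DecidableEq ι]

lemma joinShift_iterate_single_mem_joinCell (c : ι → ℕ) (j : ι) :
    (joinShift q ι)^[c j] (Pi.single (0, j) 1) ∈ joinCell fun j => (c j : ZMod q) := by
  have hsingle : (joinShift q ι)^[c j] (Pi.single (0, j) 1) = Pi.single ((c j : ZMod q), j) 1 := by
    ext p
    rw [joinShift_iterate_apply]
    simp only [Pi.single_apply, Prod.ext_iff, sub_eq_zero]
  rw [hsingle]
  refine ⟨single_mem_stdSimplex ℝ _, fun p hp => Pi.single_eq_of_ne ?_ _⟩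
  rintro rfl
  exact hp rfl

end Join

lemma exists_isCyclicTower_joinShift (R : Type*) [Ring R] (q n : ℕ) [NeZero q] {δ : ℝ}
    (hδ : 0 < δ) :
    ∃ z : ℕ → OrderedChain R (ZMod q × Fin (n + 1) → ℝ), OrderedChain.IsCyclicTower q
      (joinShift q (Fin (n + 1))) (OrderedChain.fineSimplices joinCell n δ) (n + 1) z := by
  have htower := OrderedChain.isCyclicTower_cyclicTower (R := R) (n := n + 1)
    (A := OrderedChain.fineSimplices joinCell n 1)
    (v := fun j => Pi.single (0, Fin.ofNat (n + 1) j) 1)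
    (joinShift_iterate_eq_id q (Fin (n + 1))) fun k hk c => ?_
  · exact htower.exists_fine convex_joinCell lipschitzWith_joinShift
      (fun c => ⟨_, mapsTo_joinShift_joinCell c⟩) hδ
  · have hcell : ∀ x ∈ (List.range k).reverse.map fun j =>
        (joinShift q (Fin (n + 1)))^[c j] (Pi.single (0, Fin.ofNat (n + 1) j) 1),
        x ∈ joinCell fun j : Fin (n + 1) => (c j : ZMod q) := by
      refine List.forall_mem_map.2 fun j hj => ?_
      have hjn : (Fin.ofNat (n + 1) j : ℕ) = j :=
        Nat.mod_eq_of_lt ((List.mem_range.1 (List.mem_reverse.1 hj)).trans_le hk)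
      simpa only [hjn] using
        joinShift_iterate_single_mem_joinCell (fun j : Fin (n + 1) => c j) (Fin.ofNat (n + 1) j)
    exact ⟨by simpa, ⟨_, hcell⟩, fun x hx y hy =>
      dist_le_one_of_mem_stdSimplex (hcell x hx).1 (hcell y hy).1⟩

/-- A Borsuk–Ulam theorem for equivariant maps from a join of copies of `ZMod q` to a sum of copies
of the regular representation. -/
theorem exists_mem_joinCell_forall_eq {q : ℕ} [Fact q.Prime] {κ : Type*} [Fintype κ] {n : ℕ}
    (hn : n = Fintype.card κ * (q - 1)) {F : (ZMod q × Fin (n + 1) → ℝ) → ZMod q → κ → ℝ}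
    (hF : Continuous F) (hequiv : ∀ y i, F (joinShift q _ y) i = F y (i - 1)) :
    ∃ c : Fin (n + 1) → ZMod q, ∃ y ∈ joinCell c, ∀ i i', F y i = F y i' := by
  by_contra! hno
  obtain ⟨ε, δ, hδ, hpeaks⟩ := exists_isJoinFace_peaks (isCompact_iUnion isCompact_joinCell) hF
    fun y hy => let ⟨c, hc⟩ := Set.mem_iUnion.1 hy; hno c y hc
  obtain ⟨z, hz⟩ := exists_isCyclicTower_joinShift (ZMod q) q n hδ
  have hle := hz.le_of_isJoinFace_peaks OrderedChain.isSubcomplex_fineSimplices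
    (fun l => OrderedChain.map_mem_fineSimplices lipschitzWith_joinShift
      fun c => ⟨_, mapsTo_joinShift_joinCell c⟩) hequiv
    fun l ⟨_, ⟨c, hc⟩, hdist⟩ hne =>
      hpeaks l hne (fun x hx => Set.mem_iUnion.2 ⟨c, hc x hx⟩) hdist
  omega

/-! ### Tverberg partitions -/

lemma nonempty_of_mem_simpFace {N : ℕ} {S : Finset (Fin (N + 1))} {x : Fin (N + 1) → ℝ}
    (hx : x ∈ simpFace S) : S.Nonempty := by
  obtain ⟨j, -, hj⟩ := Finset.exists_ne_zero_of_sum_ne_zero (hx.1.2.trans_ne one_ne_zero)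
  exact ⟨j, not_not.1 fun hjS => hj (hx.2 j hjS)⟩

lemma isTverbergPartition_image_fibers {I : Type*} [Fintype I] [DecidableEq I]
    {N d : ℕ} {f : (Fin (N + 1) → ℝ) → Euc d} {c : Fin (N + 1) → I} {x : I → Fin (N + 1) → ℝ}
    (hx : ∀ i, x i ∈ simpFace {j | c j = i}) (hf : ∀ i i', f (x i) = f (x i')) :
    IsTverbergPartition (Fintype.card I) f
      (Finset.univ.image fun i => ({j | c j = i} : Finset (Fin (N + 1)))) := by
  have hnonempty (i : I) : ({j | c j = i} : Finset (Fin (N + 1))).Nonempty :=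
    nonempty_of_mem_simpFace (hx i)
  have hdisjoint {i i' : I} (h : i ≠ i') :
      Disjoint ({j | c j = i} : Finset (Fin (N + 1))) ({j | c j = i'} : Finset (Fin (N + 1))) :=
    Finset.disjoint_filter.2 fun _ _ hi hi' => h (hi.symm.trans hi')
  have hinj : Function.Injective fun i => ({j | c j = i} : Finset (Fin (N + 1))) := by
    intro i i' h
    obtain ⟨j, hj⟩ := hnonempty i
    obtain rfl : c j = i := by simpa using hj
    simpa using Finset.ext_iff.1 h j
  refine ⟨Finset.card_image_of_injective _ hinj, ?_, ?_, f (x (c 0)), ?_⟩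
  · exact Finset.forall_mem_image.2 fun i _ => hnonempty i
  · exact Finset.forall_mem_image.2 fun i _ => Finset.forall_mem_image.2 fun i' _ h =>
      hdisjoint fun hii => h (by rw [hii])
  · exact Set.mem_iInter₂.2 (Finset.forall_mem_image.2 fun i _ => ⟨x i, hx i, hf _ _⟩)

lemma exists_coloring_of_continuous {q d N : ℕ} [Fact q.Prime] (hN : N = (d + 1) * (q - 1))
    {h : (Fin (N + 1) → ℝ) → Euc d} (hh : Continuous h) :
    ∃ (c : Fin (N + 1) → ZMod q) (x : ZMod q → Fin (N + 1) → ℝ),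
      (∀ i, x i ∈ simpFace {j | c j = i}) ∧ ∀ i i', h (x i) = h (x i') := by
  -- The row sums form the coordinate `none`: once they agree, all of them are `1 / q`.
  let F (y : ZMod q × Fin (N + 1) → ℝ) (i : ZMod q) : Option (Fin d) → ℝ
    | none => ∑ j, y (i, j)
    | some k => h ((q : ℝ) • fun j => y (i, j)) k
  have hF : Continuous F := by
    refine continuous_pi fun i => continuous_pi fun k => ?_
    cases k <;> simp only [F] <;> fun_prop
  obtain ⟨c, y, ⟨⟨hnonneg, hsum⟩, hc⟩, hy⟩ :=
    exists_mem_joinCell_forall_eq (by simp [hN]) hF fun _ _ => rfl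
  refine ⟨c, fun i => (q : ℝ) • fun j => y (i, j), fun i => ⟨⟨fun j => ?_, ?_⟩, fun j hj => ?_⟩,
    fun i i' => PiLp.ext fun k => congr_fun (hy i i') (some k)⟩
  · exact mul_nonneg q.cast_nonneg (hnonneg _)
  · have hrow (i' : ZMod q) : ∑ j, y (i', j) = ∑ j, y (i, j) := congr_fun (hy i' i) none
    rw [Fintype.sum_prod_type, Finset.sum_congr rfl fun i' _ => hrow i', Finset.sum_const,
      Finset.card_univ, ZMod.card, nsmul_eq_mul] at hsum
    simpa [← Finset.mul_sum] using hsum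
  · simp [hc (i, j) (by simpa using hj)]

lemma isClosed_stdSimp (N : ℕ) : IsClosed (stdSimp N) := isClosed_stdSimplex ℝ (Fin (N + 1))

lemma exists_continuous_eqOn_of_isClosed {X V : Type*} [TopologicalSpace X] [NormalSpace X]
    [NormedAddCommGroup V] [NormedSpace ℝ V] [FiniteDimensional ℝ V] {s : Set X} (hs : IsClosed s)
    {f : X → V} (hf : ContinuousOn f s) : ∃ h : X → V, Continuous h ∧ Set.EqOn h f s := by
  have : TietzeExtension V := TietzeExtension.of_tvs ℝ
  obtain ⟨h, hh⟩ := ContinuousMap.exists_restrict_eq hs ⟨s.domRestrict f, hf.domRestrict⟩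
  exact ⟨h, h.continuous, fun x hx => DFunLike.congr_fun hh ⟨x, hx⟩⟩

/-- **Topological Tverberg theorem for primes.** -/
theorem topological_tverberg_prime (q d : ℕ) (hq : q.Prime) (hd : 1 ≤ d)
    (f : (Fin ((d+1)*(q-1)+1) → ℝ) → Euc d)
    (hf : ContinuousOn f (stdSimp ((d+1)*(q-1)))) :
    ∃ P : Finset (Finset (Fin ((d+1)*(q-1)+1))), IsTverbergPartition q f P := by
  have : Fact q.Prime := ⟨hq⟩
  obtain ⟨h, hcont, heq⟩ := exists_continuous_eqOn_of_isClosed (isClosed_stdSimp _) hf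
  obtain ⟨c, x, hx, hcoincide⟩ := exists_coloring_of_continuous (q := q) rfl hcont
  have hfx (i i' : ZMod q) : f (x i) = f (x i') := by
    rw [← heq (hx i).1, ← heq (hx i').1, hcoincide i i']
  have hpart := isTverbergPartition_image_fibers hx hfx
  rw [ZMod.card] at hpart
  exact ⟨_, hpart⟩
end
end

section
/- If q is a prime number and d ≥ 1, then every continuous map f : Δ^{(d+1)(q-1)} → ℝ^d has at least (1/(q-1)!) · (q/2)^{(d+1)(q-1)/2} Tverberg partitions; i.e. the cardinality of the set of all sets {S_1, …, S_q} that are Tverberg partitions for f is at least (1/(q-1)!) · (q/2)^{((d+1)(q-1))/2}, where the exponent is the real number (d+1)(q-1)/2. -/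
open scoped BigOperators

noncomputable section

/-!
Colour the vertices of `Δ^N` with `ZMod q`. A nonnegative array over pairs of a vertex and a colour,
supported on the graph of a colouring `c`, splits into one weight vector per colour, each supported
on a colour class of `c`. If these vectors have the same sum and the same image under the
homogenization of `f`, then the colour classes form a Tverberg partition. So one has to find many
colourings whose graph spans a simplex on which a `ZMod q`-equivariant map meets the diagonal.

Pair up consecutive vertices. The colourings in which both vertices of every pair have the same
colour, or the second has the next colour, span a join of cycles on which `ZMod q` acts freely. The
obvious chains on this join form a partial free resolution of `ZMod q`. Suppose that an equivariant
map missed the diagonal there. On a fine subdivision, mark the positions where a row is far above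
its minimum, and average the marked colours of a row modulo the prime `q`. This yields an
equivariant chain map to `ZMod q` whose top chain is degenerate, which is impossible because the
augmentation of a norm vanishes modulo `q`.

Adding an arbitrary function `s` to the colourings moves the join, and every moved join contains a
good colouring. Up to translation there are `q` choices of `s` per pair of vertices, and for every
pair at most two of them are compatible with a given colouring. So at least
`q * (q / 2) ^ ((N + 1) / 2)` colourings are good, and at most `q!` of them have the same classes.
-/

namespace Tverberg

open Finsupp

section Supported

variable {R : Type*} [Semiring R] {α M : Type*} [AddCommMonoid M] [Module R M]

lemma map_mem_of_forall_single {φ : (α →₀ R) →ₗ[R] M} {s : Set α} {p : Submodule R M}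
    (h : ∀ a ∈ s, φ (single a 1) ∈ p) {c : α →₀ R} (hc : c ∈ supported R R s) : φ c ∈ p := by
  rw [supported_eq_span_single] at hc
  have hle : Submodule.span R ((fun a => single a (1 : R)) '' s) ≤ p.comap φ := by
    rw [Submodule.span_le]
    rintro _ ⟨a, ha, rfl⟩
    exact h a ha
  exact hle hc

lemma map_eq_map_of_forall_single {φ ψ : (α →₀ R) →ₗ[R] M} {s : Set α}
    (h : ∀ a ∈ s, φ (single a 1) = ψ (single a 1)) {c : α →₀ R} (hc : c ∈ supported R R s) :
    φ c = ψ c := by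
  rw [supported_eq_span_single] at hc
  refine LinearMap.eqOn_span ?_ hc
  rintro _ ⟨a, ha, rfl⟩
  exact h a ha

lemma hom_ext_single {φ ψ : (α →₀ R) →ₗ[R] M} (h : ∀ a, φ (single a 1) = ψ (single a 1)) :
    φ = ψ :=
  Finsupp.lhom_ext' fun a => LinearMap.ext_ring (h a)

end Supported

/-! ### Ordered chains -/

section Chains

variable (R : Type*) [CommRing R] {X Y Z : Type*}

/-- Prepending the vertex `x` to every ordered simplex of a chain. Ordered simplices are lists of
vertices, repetitions allowed; the empty list is the simplex of dimension `-1`. -/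
def cone (x : X) : (List X →₀ R) →ₗ[R] (List X →₀ R) :=
  lmapDomain R R (List.cons x)

/-- The augmented boundary of an ordered simplex. -/
def simplexBoundary (l : List X) : List X →₀ R :=
  ∑ i : Fin l.length, (-1 : R) ^ (i : ℕ) • single (l.eraseIdx i) 1

/-- The augmented boundary operator on ordered chains. -/
def boundary : (List X →₀ R) →ₗ[R] (List X →₀ R) :=
  linearCombination R (simplexBoundary R)

/-- The barycentric subdivision of an ordered simplex, each face `l` contributing the vertex
`b l`. -/
def simplexSubdivision (b : List X → Y) (l : List X) : List Y →₀ R :=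
  if l = [] then single [] 1
  else cone R (b l) (∑ i : Fin l.length, (-1 : R) ^ (i : ℕ) • simplexSubdivision b (l.eraseIdx i))
termination_by l.length
decreasing_by
  have := i.2
  rw [List.length_eraseIdx_of_lt i.2]
  omega

/-- The barycentric subdivision operator on ordered chains. -/
def subdivision (b : List X → Y) : (List X →₀ R) →ₗ[R] (List Y →₀ R) :=
  linearCombination R (simplexSubdivision R b)

/-- The map on ordered chains induced by a map of vertices. -/
def vertexMap (s : X → Y) : (List X →₀ R) →ₗ[R] (List Y →₀ R) :=
  lmapDomain R R (List.map s)

variable {R}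

@[simp] lemma cone_single (x : X) (l : List X) (r : R) :
    cone R x (single l r) = single (x :: l) r := by
  simp [cone]

@[simp] lemma vertexMap_single (s : X → Y) (l : List X) (r : R) :
    vertexMap R s (single l r) = single (l.map s) r := by
  simp [vertexMap]

@[simp] lemma boundary_single (l : List X) :
    boundary R (single l 1) = simplexBoundary R l := by
  simp [boundary]

@[simp] lemma subdivision_single (b : List X → Y) (l : List X) :
    subdivision R b (single l 1) = simplexSubdivision R b l := by
  simp [subdivision]

@[simp] lemma simplexBoundary_nil : simplexBoundary R ([] : List X) = 0 := by
  simp [simplexBoundary]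

lemma simplexBoundary_cons (x : X) (l : List X) :
    simplexBoundary R (x :: l) = single l 1 - cone R x (simplexBoundary R l) := by
  simp only [simplexBoundary, List.length_cons, map_sum, map_smul, cone_single]
  rw [Fin.sum_univ_succ, sub_eq_add_neg, ← Finset.sum_neg_distrib]
  congr 1
  · simp
  · refine Finset.sum_congr rfl fun i _ => ?_
    simp [pow_succ]

lemma boundary_cone (x : X) (c : List X →₀ R) :
    boundary R (cone R x c) = c - cone R x (boundary R c) := by
  have h : boundary R ∘ₗ cone R x = LinearMap.id - cone R x ∘ₗ boundary R :=
    hom_ext_single fun l => by simp [simplexBoundary_cons]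
  exact LinearMap.congr_fun h c

lemma boundary_boundary (c : List X →₀ R) : boundary R (boundary R c) = 0 := by
  have h : boundary R ∘ₗ boundary R = (0 : (List X →₀ R) →ₗ[R] (List X →₀ R)) := by
    refine hom_ext_single fun l => ?_
    induction l with
    | nil => simp
    | cons x l ih =>
      have ih' : boundary R (simplexBoundary R l) = 0 := by simpa using ih
      simp [simplexBoundary_cons, boundary_cone, ih']
  exact LinearMap.congr_fun h c

lemma cone_vertexMap (s : X → Y) (x : X) (c : List X →₀ R) :
    cone R (s x) (vertexMap R s c) = vertexMap R s (cone R x c) := by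
  have h : cone R (s x) ∘ₗ vertexMap R s = vertexMap R s ∘ₗ cone R x :=
    hom_ext_single fun l => by simp
  exact LinearMap.congr_fun h c

lemma simplexBoundary_map (s : X → Y) (l : List X) :
    simplexBoundary R (l.map s) = vertexMap R s (simplexBoundary R l) := by
  induction l with
  | nil => simp
  | cons x l ih => simp [simplexBoundary_cons, ih, ← cone_vertexMap]

lemma boundary_vertexMap (s : X → Y) (c : List X →₀ R) :
    boundary R (vertexMap R s c) = vertexMap R s (boundary R c) := by
  have h : boundary R ∘ₗ vertexMap R s = vertexMap R s ∘ₗ boundary R :=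
    hom_ext_single fun l => by simp [simplexBoundary_map]
  exact LinearMap.congr_fun h c

lemma vertexMap_vertexMap (s : X → Y) (t : Y → Z) (c : List X →₀ R) :
    vertexMap R t (vertexMap R s c) = vertexMap R (t ∘ s) c := by
  have h : vertexMap R t ∘ₗ vertexMap R s = vertexMap R (t ∘ s) :=
    hom_ext_single fun l => by simp
  exact LinearMap.congr_fun h c

@[simp] lemma simplexSubdivision_nil (b : List X → Y) :
    simplexSubdivision R b [] = single [] 1 := by
  rw [simplexSubdivision, if_pos rfl]

lemma simplexSubdivision_of_ne_nil (b : List X → Y) {l : List X} (hl : l ≠ []) :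
    simplexSubdivision R b l = cone R (b l) (subdivision R b (simplexBoundary R l)) := by
  rw [simplexSubdivision, if_neg hl, simplexBoundary]
  simp only [map_sum, map_smul, subdivision_single]

lemma eraseIdx_induction {p : List X → Prop} (nil : p [])
    (eraseIdx : ∀ l ≠ [], (∀ i < l.length, p (l.eraseIdx i)) → p l) (l : List X) : p l := by
  induction hn : l.length generalizing l with
  | zero => exact List.length_eq_zero_iff.1 hn ▸ nil
  | succ n ih =>
    refine eraseIdx l (List.ne_nil_of_length_eq_add_one hn) fun i hi => ih _ ?_
    rw [List.length_eraseIdx_of_lt hi, hn, Nat.add_sub_cancel]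

lemma boundary_simplexSubdivision (b : List X → Y) (l : List X) :
    boundary R (simplexSubdivision R b l) = subdivision R b (simplexBoundary R l) := by
  induction l using eraseIdx_induction with
  | nil => simp
  | eraseIdx l hl ih =>
    have hcycle : boundary R (subdivision R b (simplexBoundary R l)) = 0 := calc
      boundary R (subdivision R b (simplexBoundary R l)) =
          subdivision R b (boundary R (simplexBoundary R l)) := by
        rw [simplexBoundary, map_sum, map_sum, map_sum, map_sum]
        exact Finset.sum_congr rfl fun i _ => by
          simp only [map_smul, subdivision_single, boundary_single, ih i i.2]
      _ = 0 := by rw [← boundary_single, boundary_boundary, map_zero]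
    rw [simplexSubdivision_of_ne_nil b hl, boundary_cone, hcycle, map_zero, sub_zero]

lemma boundary_subdivision (b : List X → Y) (c : List X →₀ R) :
    boundary R (subdivision R b c) = subdivision R b (boundary R c) := by
  have h : boundary R ∘ₗ subdivision R b = subdivision R b ∘ₗ boundary R :=
    hom_ext_single fun l => by simp [boundary_simplexSubdivision]
  exact LinearMap.congr_fun h c

lemma simplexSubdivision_map {X' Y' : Type*} {P : Set (List X)} {b : List X → Y}
    {b' : List X' → Y'} {s : X → X'} {t : Y → Y'}
    (hP : ∀ l ∈ P, ∀ i : ℕ, l.eraseIdx i ∈ P)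
    (h : ∀ l ∈ P, l ≠ [] → b' (l.map s) = t (b l)) {l : List X} (hl : l ∈ P) :
    simplexSubdivision R b' (l.map s) = vertexMap R t (simplexSubdivision R b l) := by
  induction l using eraseIdx_induction with
  | nil => simp
  | eraseIdx l hne ih =>
    have hfaces : subdivision R b' (vertexMap R s (simplexBoundary R l)) =
        vertexMap R t (subdivision R b (simplexBoundary R l)) := by
      simp only [simplexBoundary, map_sum, map_smul, vertexMap_single, subdivision_single]
      exact Finset.sum_congr rfl fun i _ => by rw [ih i i.2 (hP l hl i)]
    rw [simplexSubdivision_of_ne_nil b hne, simplexSubdivision_of_ne_nil b' (by simpa using hne),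
      h l hl hne, ← cone_vertexMap, simplexBoundary_map, hfaces]

lemma subdivision_vertexMap {X' Y' : Type*} {P : Set (List X)} {b : List X → Y}
    {b' : List X' → Y'} {s : X → X'} {t : Y → Y'}
    (hP : ∀ l ∈ P, ∀ i : ℕ, l.eraseIdx i ∈ P)
    (h : ∀ l ∈ P, l ≠ [] → b' (l.map s) = t (b l)) {c : List X →₀ R}
    (hc : c ∈ supported R R P) :
    subdivision R b' (vertexMap R s c) = vertexMap R t (subdivision R b c) :=
  map_eq_map_of_forall_single (φ := subdivision R b' ∘ₗ vertexMap R s)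
    (ψ := vertexMap R t ∘ₗ subdivision R b)
    (fun l hl => by simpa using simplexSubdivision_map hP h hl) hc

lemma vertexMap_mem_supported {P : Set (List X)} {Q : Set (List Y)} {s : X → Y}
    (h : ∀ l ∈ P, l.map s ∈ Q) {c : List X →₀ R} (hc : c ∈ supported R R P) :
    vertexMap R s c ∈ supported R R Q :=
  map_mem_of_forall_single
    (fun l hl => by simpa using single_mem_supported R (1 : R) (h l hl)) hc

lemma cone_mem_supported {P Q : Set (List X)} {x : X}
    (h : ∀ l ∈ P, x :: l ∈ Q) {c : List X →₀ R} (hc : c ∈ supported R R P) :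
    cone R x c ∈ supported R R Q :=
  map_mem_of_forall_single
    (fun l hl => by simpa using single_mem_supported R (1 : R) (h l hl)) hc

/-- `l'` lists the values of `b` along a complete flag of faces of the ordered simplex `l`, starting
with `l` itself. These lists are the simplices of the barycentric subdivision of `l`. -/
inductive IsFlagImage (b : List X → Y) : List X → List Y → Prop
  | nil : IsFlagImage b [] []
  | cons {l : List X} {l' : List Y} {i : ℕ} (hi : i < l.length)
      (h : IsFlagImage b (l.eraseIdx i) l') : IsFlagImage b l (b l :: l')

lemma IsFlagImage.length_eq {b : List X → Y} {l : List X} {l' : List Y}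
    (h : IsFlagImage b l l') : l'.length = l.length := by
  induction h with
  | nil => rfl
  | cons hi _ ih =>
    rw [List.length_cons, ih, List.length_eraseIdx_of_lt hi]
    omega

lemma simplexSubdivision_mem_supported (b : List X → Y) (l : List X) :
    simplexSubdivision R b l ∈ supported R R {l' | IsFlagImage b l l'} := by
  induction l using eraseIdx_induction with
  | nil =>
    rw [simplexSubdivision_nil]
    exact single_mem_supported R 1 .nil
  | eraseIdx l hl ih =>
    rw [simplexSubdivision, if_neg hl, map_sum]
    refine Submodule.sum_mem _ fun i _ => ?_
    rw [map_smul]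
    exact Submodule.smul_mem _ _ (cone_mem_supported (fun l' h => h.cons i.2) (ih i i.2))

lemma subdivision_mem_supported {P : Set (List X)} {Q : Set (List Y)} {b : List X → Y}
    (h : ∀ l ∈ P, ∀ l', IsFlagImage b l l' → l' ∈ Q) {c : List X →₀ R}
    (hc : c ∈ supported R R P) : subdivision R b c ∈ supported R R Q :=
  map_mem_of_forall_single
    (fun l hl => by
      simpa using supported_mono (h l hl) (simplexSubdivision_mem_supported b l)) hc

end Chains

/-! ### Partial resolutions -/

section PartialResolution

variable {q : ℕ} [NeZero q] {R : Type*} [CommRing R] {X Y : Type*}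

/-- An equivariant chain map, up to degree `N`, from the standard periodic resolution of
`ZMod q` to the ordered chains on `X`, on which `t : ZMod q` acts through the vertex map `s t`;
`y n` is the image of the generator of degree `n`. -/
structure IsPartialResolution (s : ZMod q → X → X) (N : ℕ) (y : ℕ → List X →₀ R) : Prop where
  boundary_zero : boundary R (y 0) = single [] 1
  boundary_odd : ∀ m, 2 * m + 1 ≤ N →
    boundary R (y (2 * m + 1)) = vertexMap R (s 1) (y (2 * m)) - y (2 * m)
  boundary_even : ∀ m, 2 * m + 2 ≤ N →
    boundary R (y (2 * m + 2)) = ∑ t, vertexMap R (s t) (y (2 * m + 1))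

lemma IsPartialResolution.map {s : ZMod q → X → X} {s' : ZMod q → Y → Y} {N : ℕ}
    {y : ℕ → List X →₀ R} (hy : IsPartialResolution s N y) {φ : (List X →₀ R) →ₗ[R] (List Y →₀ R)}
    (hboundary : ∀ c, boundary R (φ c) = φ (boundary R c)) (hnil : φ (single [] 1) = single [] 1)
    (hequiv : ∀ n ≤ N, ∀ t, φ (vertexMap R (s t) (y n)) = vertexMap R (s' t) (φ (y n))) :
    IsPartialResolution s' N fun n => φ (y n) where
  boundary_zero := by rw [hboundary, hy.boundary_zero, hnil]
  boundary_odd m hm := by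
    rw [hboundary, hy.boundary_odd m hm, map_sub, hequiv _ (by omega)]
  boundary_even m hm := by
    rw [hboundary, hy.boundary_even m hm, map_sum]
    exact Finset.sum_congr rfl fun t _ => hequiv _ (by omega) t

end PartialResolution

section Degenerate

variable {q : ℕ} (R : Type*) [CommRing R]

/-- The action of `t : ZMod q` by translation on the ordered chains on `ZMod q`. -/
def translate (t : ZMod q) : (List (ZMod q) →₀ R) →ₗ[R] (List (ZMod q) →₀ R) :=
  vertexMap R (· + t)

/-- The difference operator `T - 1`, where `T` is the translation by `1`. -/
def translateSubOne : (List (ZMod q) →₀ R) →ₗ[R] (List (ZMod q) →₀ R) :=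
  translate R 1 - LinearMap.id

/-- The norm operator `∑ t, T ^ t`, where `T` is the translation by `1`. -/
def translateNorm [NeZero q] : (List (ZMod q) →₀ R) →ₗ[R] (List (ZMod q) →₀ R) :=
  ∑ t, translate R t

/-- The chains on the ordered simplices with two equal consecutive vertices and on the empty
simplex. The latter is included because it is the only ordered simplex not moved freely by the
translations. -/
def degenerateChains (q : ℕ) : Submodule R (List (ZMod q) →₀ R) :=
  supported R R {l | l = [] ∨ ¬ l.IsChain (· ≠ ·)}

/-- The projection of chains onto the simplices with first vertex `0`, which represent the free
orbits of the translations. -/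
def rootPart : (List (ZMod q) →₀ R) →ₗ[R] (List (ZMod q) →₀ R) :=
  linearCombination R fun l => if l.head? = some 0 then single l 1 else 0

variable {R}

@[simp] lemma translate_single (t : ZMod q) (l : List (ZMod q)) (r : R) :
    translate R t (single l r) = single (l.map (· + t)) r :=
  vertexMap_single _ l r

lemma boundary_translate (t : ZMod q) (c : List (ZMod q) →₀ R) :
    boundary R (translate R t c) = translate R t (boundary R c) :=
  boundary_vertexMap _ c

lemma translate_add (s t : ZMod q) (c : List (ZMod q) →₀ R) :
    translate R (s + t) c = translate R t (translate R s c) := by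
  simp only [translate, vertexMap_vertexMap, Function.comp_def, add_assoc]

lemma translate_zero (c : List (ZMod q) →₀ R) : translate R 0 c = c := by
  have h : translate R (0 : ZMod q) = LinearMap.id := hom_ext_single fun l => by simp
  exact LinearMap.congr_fun h c

lemma translateSubOne_apply (c : List (ZMod q) →₀ R) :
    translateSubOne R c = translate R 1 c - c := rfl

lemma boundary_translateSubOne (c : List (ZMod q) →₀ R) :
    boundary R (translateSubOne R c) = translateSubOne R (boundary R c) := by
  simp only [translateSubOne_apply, map_sub, boundary_translate]

lemma isChain_map_add_iff (t : ZMod q) (l : List (ZMod q)) :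
    (l.map (· + t)).IsChain (· ≠ ·) ↔ l.IsChain (· ≠ ·) := by
  simp [List.isChain_map]

lemma translate_mem_degenerateChains (t : ZMod q) {c : List (ZMod q) →₀ R}
    (hc : c ∈ degenerateChains R q) : translate R t c ∈ degenerateChains R q := by
  refine vertexMap_mem_supported (fun l hl => ?_) hc
  simpa only [Set.mem_ofPred_eq, List.map_eq_nil_iff, isChain_map_add_iff] using hl

lemma rootPart_mem_degenerateChains {c : List (ZMod q) →₀ R}
    (hc : c ∈ degenerateChains R q) : rootPart R c ∈ degenerateChains R q := by
  refine map_mem_of_forall_single (fun l hl => ?_) hc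
  rw [rootPart, linearCombination_single, one_smul]
  split_ifs
  · exact single_mem_supported R 1 hl
  · exact zero_mem _

lemma simplexBoundary_mem_supported_not_isChain {X : Type*} {l : List X}
    (hl : ¬ l.IsChain (· ≠ ·)) :
    simplexBoundary R l ∈ supported R R {l : List X | ¬ l.IsChain (· ≠ ·)} := by
  induction l with
  | nil => exact absurd .nil hl
  | cons x l ih =>
    rw [simplexBoundary_cons]
    by_cases h : l.IsChain (· ≠ ·)
    · obtain ⟨l, rfl⟩ : ∃ l', l = x :: l' := by
        cases l with
        | nil => simp at hl
        | cons y l => exact ⟨l, by by_contra hxy; exact hl (.cons_cons (by grind) h)⟩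
      rw [simplexBoundary_cons, map_sub, cone_single, sub_sub_cancel]
      refine map_mem_of_forall_single (φ := cone R x ∘ₗ cone R x) (s := Set.univ)
        (fun l _ => ?_) (by simp)
      rw [LinearMap.comp_apply, cone_single, cone_single]
      exact single_mem_supported R 1 fun h => (List.isChain_cons_cons.1 h).1 rfl
    · refine sub_mem (single_mem_supported R 1 h) (cone_mem_supported (fun l hl => ?_) (ih h))
      exact mt List.IsChain.tail hl

lemma boundary_mem_supported_not_isChain {c : List (ZMod q) →₀ R}
    (hc : c ∈ degenerateChains R q) :
    boundary R c ∈ supported R R {l : List (ZMod q) | ¬ l.IsChain (· ≠ ·)} := by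
  refine map_mem_of_forall_single (fun l hl => ?_) hc
  rw [boundary_single]
  obtain rfl | hl := hl
  · simp
  · exact simplexBoundary_mem_supported_not_isChain hl

lemma boundary_mem_degenerateChains {c : List (ZMod q) →₀ R}
    (hc : c ∈ degenerateChains R q) : boundary R c ∈ degenerateChains R q :=
  supported_mono (fun _ => Or.inr) (boundary_mem_supported_not_isChain hc)

/-- The chains that vanish modulo degenerate chains, boundaries and values of `φ`. -/
def IsNullChain (φ : (List (ZMod q) →₀ R) →ₗ[R] (List (ZMod q) →₀ R))
    (c : List (ZMod q) →₀ R) : Prop :=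
  ∃ w z, c - boundary R w - φ z ∈ degenerateChains R q

lemma IsNullChain.of_boundary_eq {φ ψ : (List (ZMod q) →₀ R) →ₗ[R] (List (ZMod q) →₀ R)}
    (hφ : ∀ c, boundary R (φ c) = φ (boundary R c))
    (hφψ : ∀ c, φ c ∈ degenerateChains R q → ∃ z, c - ψ z ∈ degenerateChains R q)
    {c c' : List (ZMod q) →₀ R} (hc' : IsNullChain φ c') (h : boundary R c' = φ c) :
    IsNullChain ψ c := by
  obtain ⟨w, z, hwz⟩ := hc'
  have hmem := boundary_mem_degenerateChains hwz
  rw [map_sub, map_sub, boundary_boundary, sub_zero, hφ, h, ← map_sub] at hmem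
  exact ⟨z, hφψ _ hmem⟩

variable [NeZero q]

lemma translateNorm_apply (c : List (ZMod q) →₀ R) :
    translateNorm R c = ∑ t, translate R t c := by
  rw [translateNorm, LinearMap.sum_apply]

lemma boundary_translateNorm (c : List (ZMod q) →₀ R) :
    boundary R (translateNorm R c) = translateNorm R (boundary R c) := by
  simp only [translateNorm_apply, map_sum, boundary_translate]

lemma translate_sub_self_eq (t : ZMod q) (c : List (ZMod q) →₀ R) :
    translate R t c - c =
      translateSubOne R (∑ i ∈ Finset.range t.val, translate R (i : ZMod q) c) := by
  rw [map_sum, Finset.sum_congr rfl fun i _ => by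
    rw [translateSubOne_apply, ← translate_add, ← Nat.cast_succ],
    Finset.sum_range_sub fun i : ℕ => translate R (i : ZMod q) c]
  simp [translate_zero]

-- Every orbit of nonempty simplices contains exactly one simplex with first vertex `0`.
lemma sub_sum_translate_rootPart_mem (c : List (ZMod q) →₀ R) :
    c - ∑ t, translate R t (rootPart R (translate R (-t) c)) ∈ degenerateChains R q := by
  let φ : (List (ZMod q) →₀ R) →ₗ[R] (List (ZMod q) →₀ R) :=
    LinearMap.id - ∑ t : ZMod q, translate R t ∘ₗ rootPart R ∘ₗ translate R (-t)
  have hφ (c : List (ZMod q) →₀ R) :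
      φ c = c - ∑ t, translate R t (rootPart R (translate R (-t) c)) := by
    simp only [φ, LinearMap.sub_apply, LinearMap.id_apply, LinearMap.sum_apply,
      LinearMap.comp_apply]
  rw [← hφ]
  refine map_mem_of_forall_single (s := Set.univ) (fun l _ => ?_) (by simp)
  rw [hφ]
  cases l with
  | nil =>
    simp only [translate_single, List.map_nil, rootPart, linearCombination_single, List.head?_nil,
      reduceCtorEq, if_false, smul_zero, map_zero, Finset.sum_const_zero, sub_zero]
    exact single_mem_supported R 1 (Or.inl rfl)
  | cons a l =>
    have hzero (t : ZMod q) (ht : t ≠ a) :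
        rootPart R (translate R (-t) (single (a :: l) 1)) = 0 := by
      simp [rootPart, ← sub_eq_add_neg, sub_eq_zero, ht.symm]
    rw [Fintype.sum_eq_single a fun t ht => by rw [hzero t ht, map_zero]]
    simp [rootPart, Function.comp_def]

lemma exists_sub_translateNorm_mem {c : List (ZMod q) →₀ R}
    (hc : translateSubOne R c ∈ degenerateChains R q) :
    ∃ z, c - translateNorm R z ∈ degenerateChains R q := by
  have hsub (t : ZMod q) : translate R t c - c ∈ degenerateChains R q := by
    rw [translate_sub_self_eq, map_sum]
    refine sum_mem fun i _ => ?_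
    have := translate_mem_degenerateChains (i : ZMod q) hc
    rwa [translateSubOne_apply, map_sub, ← translate_add, add_comm, translate_add,
      ← translateSubOne_apply] at this
  refine ⟨rootPart R c, ?_⟩
  have h := add_mem (sub_sum_translate_rootPart_mem c) (sum_mem fun t _ =>
    translate_mem_degenerateChains t (rootPart_mem_degenerateChains (hsub (-t))) :
      ∑ t : ZMod q, translate R t (rootPart R (translate R (-t) c - c)) ∈ degenerateChains R q)
  simpa only [map_sub, Finset.sum_sub_distrib, sub_add_sub_cancel, translateNorm_apply] using h

lemma exists_sub_translateSubOne_mem {c : List (ZMod q) →₀ R}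
    (hc : translateNorm R c ∈ degenerateChains R q) :
    ∃ z, c - translateSubOne R z ∈ degenerateChains R q := by
  let e (t : ZMod q) : List (ZMod q) →₀ R := rootPart R (translate R (-t) c)
  refine ⟨∑ t, ∑ i ∈ Finset.range t.val, translate R (i : ZMod q) (e t), ?_⟩
  have hnorm : ∑ t, e t ∈ degenerateChains R q := by
    have h : ∑ t, e t = rootPart R (translateNorm R c) := by
      rw [translateNorm_apply, map_sum]
      exact Equiv.sum_comp (Equiv.neg (ZMod q)) fun t => rootPart R (translate R t c)
    exact h ▸ rootPart_mem_degenerateChains hc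
  have hsub : translateSubOne R (∑ t, ∑ i ∈ Finset.range t.val, translate R (i : ZMod q) (e t)) =
      ∑ t, translate R t (e t) - ∑ t, e t := by
    rw [map_sum, ← Finset.sum_sub_distrib]
    exact Finset.sum_congr rfl fun t _ => (translate_sub_self_eq t (e t)).symm
  rw [hsub, ← sub_add]
  exact add_mem (sub_sum_translate_rootPart_mem c) hnorm

lemma not_isNullChain_translateNorm [Nontrivial R] [CharP R q] {c : List (ZMod q) →₀ R}
    (hc : boundary R c = single [] 1) : ¬ IsNullChain (translateNorm R) c := by
  rintro ⟨w, z, hwz⟩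
  have hmem := boundary_mem_supported_not_isChain hwz
  have hnorm : translateNorm R (boundary R z) [] = 0 := by
    have h (t : ZMod q) : translate R t (boundary R z) [] = boundary R z [] :=
      mapDomain_apply (List.map_injective_iff.2 (add_left_injective t)) _ []
    simp [translateNorm_apply, h]
  have hcoeff := (mem_supported' R _).1 hmem [] (by simp)
  rw [map_sub, map_sub, boundary_boundary, sub_zero, boundary_translateNorm, hc,
    Finsupp.sub_apply, hnorm, single_eq_same, sub_zero] at hcoeff
  exact one_ne_zero hcoeff

-- The normalized ordered chains form a complex of free `ZMod q`-modules. Were the top generator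
-- degenerate, then generator after generator would be null, down to the one of degree `0`. But that
-- one has augmentation `1`, whereas the augmentation of a norm is divisible by `q`.
theorem IsPartialResolution.notMem_degenerateChains [Nontrivial R] [CharP R q] {N : ℕ}
    {y : ℕ → List (ZMod q) →₀ R} (hy : IsPartialResolution (fun t a => a + t) N y) :
    y N ∉ degenerateChains R q := by
  intro hN
  have hodd (m : ℕ) (hm : 2 * m + 1 ≤ N) (h : IsNullChain (translateSubOne R) (y (2 * m + 1))) :
      IsNullChain (translateNorm R) (y (2 * m)) :=
    h.of_boundary_eq boundary_translateSubOne (fun _ => exists_sub_translateNorm_mem)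
      (hy.boundary_odd m hm)
  have heven (m : ℕ) (hm : 2 * m + 2 ≤ N) (h : IsNullChain (translateNorm R) (y (2 * m + 2))) :
      IsNullChain (translateSubOne R) (y (2 * m + 1)) :=
    h.of_boundary_eq boundary_translateNorm (fun _ => exists_sub_translateSubOne_mem)
      ((hy.boundary_even m hm).trans (translateNorm_apply _).symm)
  have hnull (m : ℕ) : 2 * m ≤ N → ¬ IsNullChain (translateNorm R) (y (2 * m)) := by
    induction m with
    | zero => exact fun _ => not_isNullChain_translateNorm hy.boundary_zero
    | succ m ih => exact fun hm h => ih (by omega) (hodd m (by omega) (heven m hm h))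
  have hself (φ) : IsNullChain φ (y N) := ⟨0, 0, by simpa using hN⟩
  obtain ⟨m, rfl | rfl⟩ := Nat.even_or_odd' N
  · exact hnull m le_rfl (hself _)
  · exact hnull m (by omega) (hodd m le_rfl (hself _))

end Degenerate

/-! ### Joins of cycles -/

section Join

variable {R : Type*} [CommRing R] {q : ℕ}

/-- The action of `t : ZMod q` on the vertices `(i, a)`, where `i` is an index and `a` a colour. -/
def recolour (t : ZMod q) (v : ℕ × ZMod q) : ℕ × ZMod q := (v.1, v.2 + t)

/-- The join of a chain with the path `(2 * m, 0)`, `(2 * m + 1, 1)`, `(2 * m, 1)`. The translates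
of this path form a cycle of length `2 * q`. -/
def pathJoin (m : ℕ) (c : List (ℕ × ZMod q) →₀ R) : List (ℕ × ZMod q) →₀ R :=
  cone R (2 * m, 0) (cone R (2 * m + 1, 1) c) + cone R (2 * m + 1, 1) (cone R (2 * m, 1) c)

variable (R q) in
/-- The fundamental cycle of the join of the first `m` cycles of `pathJoin`. -/
def joinCycle [NeZero q] : ℕ → List (ℕ × ZMod q) →₀ R
  | 0 => single [] 1
  | m + 1 => ∑ t, vertexMap R (recolour t) (pathJoin m (joinCycle m))

variable (R q) in
/-- The generators of a partial resolution by chains on the join of the cycles. -/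
def generator [NeZero q] (n : ℕ) : List (ℕ × ZMod q) →₀ R :=
  if Even n then cone R (n, 0) (joinCycle R q (n / 2)) else pathJoin (n / 2) (joinCycle R q (n / 2))

lemma boundary_pathJoin (m : ℕ) {c : List (ℕ × ZMod q) →₀ R} (hc : boundary R c = 0) :
    boundary R (pathJoin m c) = cone R (2 * m, 1) c - cone R (2 * m, 0) c := by
  simp only [pathJoin, map_add, boundary_cone, hc, map_zero, sub_zero]
  abel

section Cycle

variable [NeZero q]

lemma generator_even (m : ℕ) :
    generator R q (2 * m) = cone R (2 * m, 0) (joinCycle R q m) := by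
  simp [generator]

lemma generator_odd (m : ℕ) : generator R q (2 * m + 1) = pathJoin m (joinCycle R q m) := by
  have : (2 * m + 1) / 2 = m := by omega
  simp [generator, this]

lemma vertexMap_recolour_joinCycle (s : ZMod q) (m : ℕ) :
    vertexMap R (recolour s) (joinCycle R q m) = joinCycle R q m := by
  cases m with
  | zero => simp [joinCycle]
  | succ m =>
    have hcomp (t : ZMod q) : recolour s ∘ recolour t = recolour (t + s) :=
      funext fun v => Prod.ext rfl (add_assoc _ _ _)
    simp only [joinCycle, map_sum, vertexMap_vertexMap, hcomp]
    exact Equiv.sum_comp (Equiv.addRight s)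
      fun t => vertexMap R (recolour t) (pathJoin m (joinCycle R q m))

lemma vertexMap_recolour_cone_joinCycle (t a : ZMod q) (i m : ℕ) :
    vertexMap R (recolour t) (cone R (i, a) (joinCycle R q m)) =
      cone R (i, a + t) (joinCycle R q m) := by
  rw [← cone_vertexMap, vertexMap_recolour_joinCycle, recolour]

lemma boundary_joinCycle (m : ℕ) : boundary R (joinCycle R q m) = 0 := by
  induction m with
  | zero => simp [joinCycle]
  | succ m ih =>
    simp only [joinCycle, map_sum, boundary_vertexMap, boundary_pathJoin m ih, map_sub,
      vertexMap_recolour_cone_joinCycle, Finset.sum_sub_distrib, zero_add]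
    rw [sub_eq_zero]
    exact Equiv.sum_comp (Equiv.addLeft 1) fun t => cone R (2 * m, t) (joinCycle R q m)

variable (R q) in
lemma isPartialResolution_generator (N : ℕ) :
    IsPartialResolution recolour N (generator R q) where
  boundary_zero := by
    have := generator_even (R := R) (q := q) 0
    rw [mul_zero] at this
    simp [this, joinCycle, simplexBoundary_cons]
  boundary_odd m _ := by
    rw [generator_odd, generator_even, boundary_pathJoin m (boundary_joinCycle m),
      vertexMap_recolour_cone_joinCycle, zero_add]
  boundary_even m _ := by
    rw [show 2 * m + 2 = 2 * (m + 1) by ring, generator_even, generator_odd, boundary_cone,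
      boundary_joinCycle, map_zero, sub_zero, joinCycle]

end Cycle

/-- The colourings in which every odd index `2 * m + 1` has the colour of `2 * m` or the next one.
The graphs of these colourings are the maximal simplices of the join of the cycles. -/
def IsStaircase (c : ℕ → ZMod q) : Prop :=
  ∀ m, c (2 * m + 1) = c (2 * m) ∨ c (2 * m + 1) = c (2 * m) + 1

variable (q) in
/-- The ordered simplices with `n` vertices in the join of the cycles, all of index below `n`. -/
def joinSimplices (n : ℕ) : Set (List (ℕ × ZMod q)) :=
  {l | l.length = n ∧ ∃ c, IsStaircase c ∧ ∀ v ∈ l, v.1 < n ∧ c v.1 = v.2}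

lemma IsStaircase.add_const {c : ℕ → ZMod q} (h : IsStaircase c) (t : ZMod q) :
    IsStaircase fun i => c i + t := fun m => by
  simpa only [add_right_comm _ t, add_left_inj] using h m

lemma IsStaircase.exists_update {c : ℕ → ZMod q} (h : IsStaircase c) (m : ℕ) {x y : ZMod q}
    (hxy : y = x ∨ y = x + 1) :
    ∃ c', IsStaircase c' ∧ c' (2 * m) = x ∧ c' (2 * m + 1) = y ∧ ∀ i < 2 * m, c' i = c i := by
  refine ⟨Function.update (Function.update c (2 * m) x) (2 * m + 1) y, fun k => ?_, ?_, ?_, ?_⟩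
  · rcases eq_or_ne k m with rfl | hk
    · simpa using hxy
    · have := h k
      grind [Function.update_apply]
  all_goals grind [Function.update_apply]

lemma map_recolour_mem_joinSimplices {n : ℕ} (t : ZMod q) {l : List (ℕ × ZMod q)}
    (hl : l ∈ joinSimplices q n) : l.map (recolour t) ∈ joinSimplices q n := by
  obtain ⟨hlen, c, hc, hgraph⟩ := hl
  refine ⟨by rw [List.length_map, hlen], _, hc.add_const t, List.forall_mem_map.2 fun v hv => ?_⟩
  exact ⟨(hgraph v hv).1, congrArg (· + t) (hgraph v hv).2⟩

lemma cons_mem_joinSimplices {m : ℕ} {x y : ZMod q} (hxy : y = x ∨ y = x + 1)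
    {l : List (ℕ × ZMod q)} (hl : l ∈ joinSimplices q (2 * m)) :
    (2 * m, x) :: l ∈ joinSimplices q (2 * m + 1) ∧
      (2 * m, x) :: (2 * m + 1, y) :: l ∈ joinSimplices q (2 * m + 2) ∧
      (2 * m + 1, y) :: (2 * m, x) :: l ∈ joinSimplices q (2 * m + 2) := by
  obtain ⟨hlen, c, hc, hgraph⟩ := hl
  obtain ⟨c', hc', hx, hy, hlt⟩ := hc.exists_update m hxy
  have hgraph' : ∀ v ∈ l, v.1 < 2 * m ∧ c' v.1 = v.2 := fun v hv =>
    ⟨(hgraph v hv).1, (hlt _ (hgraph v hv).1).trans (hgraph v hv).2⟩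
  refine ⟨⟨by grind, c', hc', by grind⟩, ⟨by grind, c', hc', by grind⟩,
    ⟨by grind, c', hc', by grind⟩⟩

lemma pathJoin_mem_supported {m : ℕ} {c : List (ℕ × ZMod q) →₀ R}
    (hc : c ∈ supported R R (joinSimplices q (2 * m))) :
    pathJoin m c ∈ supported R R (joinSimplices q (2 * m + 2)) := by
  have hcone₂ {v w : ℕ × ZMod q} (h : ∀ l ∈ joinSimplices q (2 * m),
      v :: w :: l ∈ joinSimplices q (2 * m + 2)) :
      cone R v (cone R w c) ∈ supported R R (joinSimplices q (2 * m + 2)) :=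
    cone_mem_supported (P := {l | v :: l ∈ joinSimplices q (2 * m + 2)}) (fun _ hl => hl)
      (cone_mem_supported h hc)
  exact add_mem (hcone₂ fun l hl => (cons_mem_joinSimplices (Or.inr (zero_add 1).symm) hl).2.1)
    (hcone₂ fun l hl => (cons_mem_joinSimplices (Or.inl rfl) hl).2.2)

variable [NeZero q]

lemma joinCycle_mem_supported (m : ℕ) :
    joinCycle R q m ∈ supported R R (joinSimplices q (2 * m)) := by
  induction m with
  | zero => exact single_mem_supported R 1 ⟨rfl, 0, fun _ => Or.inl rfl, by simp⟩
  | succ m ih =>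
    exact sum_mem fun t _ => vertexMap_mem_supported
      (fun l hl => map_recolour_mem_joinSimplices t hl) (pathJoin_mem_supported ih)

variable (R q) in
lemma generator_mem_supported (n : ℕ) :
    generator R q n ∈ supported R R (joinSimplices q (n + 1)) := by
  rcases Nat.even_or_odd' n with ⟨m, rfl | rfl⟩
  · rw [generator_even]
    exact cone_mem_supported (fun l hl => (cons_mem_joinSimplices (Or.inl rfl) hl).1)
      (joinCycle_mem_supported m)
  · rw [generator_odd]
    exact pathJoin_mem_supported (joinCycle_mem_supported m)

end Join

/-! ### Barycentric subdivision -/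

section Barycentric

section Module

variable {E F : Type*} [AddCommGroup E] [Module ℝ E] [AddCommGroup F] [Module ℝ F]

/-- The barycentre of a list of points. -/
def barycentre (l : List E) : E := (l.length : ℝ)⁻¹ • l.sum

lemma barycentre_map (s : E →ₗ[ℝ] F) (l : List E) :
    barycentre (l.map s) = s (barycentre l) := by
  simp [barycentre, map_list_sum]

lemma barycentre_mem_convexHull {l : List E} (hl : l ≠ []) :
    barycentre l ∈ convexHull ℝ {x | x ∈ l} := by
  have hsum : barycentre l = ∑ i : Fin l.length, (l.length : ℝ)⁻¹ • l[(i : ℕ)] := by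
    rw [← Finset.smul_sum, Fin.sum_univ_getElem, barycentre]
  rw [hsum]
  refine (convex_convexHull ℝ _).sum_mem (fun i _ => by positivity) ?_ fun i _ =>
    subset_convexHull ℝ _ (List.getElem_mem i.2)
  simp [hl]

lemma IsFlagImage.mem_convexHull {l l' : List E} (h : IsFlagImage barycentre l l') {x : E}
    (hx : x ∈ l') : x ∈ convexHull ℝ {x | x ∈ l} := by
  induction h with
  | nil => simp at hx
  | cons hi _ ih =>
    rcases List.mem_cons.1 hx with rfl | hx
    · exact barycentre_mem_convexHull (List.ne_nil_of_length_pos (by omega))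
    · exact convexHull_mono (fun y => List.mem_of_mem_eraseIdx) (ih hx)

end Module

variable {E : Type*} [SeminormedAddCommGroup E]

lemma norm_sum_sub_smul_le {l : List E} {v : E} {D : ℝ} (h : ∀ x ∈ l, dist x v ≤ D) :
    ‖l.sum - l.length • v‖ ≤ l.length * D := by
  induction l with
  | nil => simp
  | cons x l ih =>
    have hsplit : (x :: l).sum - (x :: l).length • v = (l.sum - l.length • v) + (x - v) := by
      rw [List.sum_cons, List.length_cons, succ_nsmul]
      abel
    calc ‖(x :: l).sum - (x :: l).length • v‖ ≤ ‖l.sum - l.length • v‖ + ‖x - v‖ :=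
          hsplit ▸ norm_add_le _ _
      _ ≤ l.length * D + D := add_le_add (ih fun y hy => h y (List.mem_cons_of_mem x hy))
          (dist_eq_norm x v ▸ h x List.mem_cons_self)
      _ = (x :: l).length * D := by push_cast [List.length_cons]; ring

variable [NormedSpace ℝ E]

lemma dist_barycentre_le {l : List E} {D : ℝ} (h : ∀ x ∈ l, ∀ y ∈ l, dist x y ≤ D) {v : E}
    (hv : v ∈ l) : dist v (barycentre l) ≤ (1 - (l.length : ℝ)⁻¹) * D := by
  classical
  obtain ⟨l', hl'⟩ : ∃ l', l.Perm (v :: l') := ⟨_, List.perm_cons_erase hv⟩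
  have hlen : (l.length : ℝ) = l'.length + 1 := by
    rw [hl'.length_eq, List.length_cons, Nat.cast_succ]
  have hsub : barycentre l - v = (l.length : ℝ)⁻¹ • (l'.sum - l'.length • v) := by
    rw [barycentre, hl'.sum_eq, List.sum_cons, hlen, ← Nat.cast_smul_eq_nsmul ℝ]
    match_scalars
    · field_simp
      ring
    · field_simp
  have hnorm : ‖l'.sum - l'.length • v‖ ≤ l'.length * D :=
    norm_sum_sub_smul_le fun x hx => h x (hl'.mem_iff.2 (List.mem_cons_of_mem v hx)) v hv
  rw [dist_comm, dist_eq_norm, hsub, norm_smul, norm_inv, Real.norm_natCast]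
  calc (l.length : ℝ)⁻¹ * ‖l'.sum - l'.length • v‖ ≤ (l.length : ℝ)⁻¹ * (l'.length * D) := by
        gcongr
    _ = (1 - (l.length : ℝ)⁻¹) * D := by rw [hlen]; field_simp; ring

lemma IsFlagImage.dist_barycentre_le {l l' : List E} (h : IsFlagImage barycentre l l') {D : ℝ}
    (hD : ∀ x ∈ l, ∀ y ∈ l, dist x y ≤ D) {x : E} (hx : x ∈ l') :
    dist x (barycentre l) ≤ (1 - (l.length : ℝ)⁻¹) * D :=
  convexHull_min (fun _ hv => Metric.mem_closedBall.2 (Tverberg.dist_barycentre_le hD hv))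
    (convex_closedBall _ _) (h.mem_convexHull hx)

lemma IsFlagImage.dist_le {l l' : List E} (h : IsFlagImage barycentre l l') {D : ℝ}
    (hD : ∀ x ∈ l, ∀ y ∈ l, dist x y ≤ D) {x y : E} (hx : x ∈ l') (hy : y ∈ l') :
    dist x y ≤ (1 - (l.length : ℝ)⁻¹) * D := by
  induction h with
  | nil => simp at hx
  | @cons l l' i hi h ih =>
    have hflag := IsFlagImage.cons hi h
    rcases List.mem_cons.1 hx with rfl | hx'
    · rw [dist_comm]
      exact hflag.dist_barycentre_le hD hy
    rcases List.mem_cons.1 hy with rfl | hy'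
    · exact hflag.dist_barycentre_le hD hx
    have hsub : ∀ x ∈ l.eraseIdx i, x ∈ l := fun _ => List.mem_of_mem_eraseIdx
    have hpos : 0 < (l.eraseIdx i).length := h.length_eq ▸ List.length_pos_of_mem hx'
    have hlen : (l.eraseIdx i).length ≤ l.length := List.length_eraseIdx_le l i
    have hD0 : 0 ≤ D := dist_nonneg.trans (hD _ (List.getElem_mem hi) _ (List.getElem_mem hi))
    refine (ih (fun x hx y hy => hD x (hsub x hx) y (hsub y hy)) hx' hy').trans ?_
    gcongr

/-- The ordered simplices of diameter at most `D` that are contained in a member of `𝒦`. -/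
def smallSimplices (𝒦 : Set (Set E)) (D : ℝ) : Set (List E) :=
  {l | (∃ K ∈ 𝒦, ∀ x ∈ l, x ∈ K) ∧ ∀ x ∈ l, ∀ y ∈ l, dist x y ≤ D}

lemma iterate_subdivision_mem_supported {R : Type*} [CommRing R] {𝒦 : Set (Set E)}
    (h𝒦 : ∀ K ∈ 𝒦, Convex ℝ K) {n : ℕ} {D : ℝ} {c : List E →₀ R}
    (hc : c ∈ supported R R (smallSimplices 𝒦 D ∩ {l | l.length = n})) (r : ℕ) :
    (subdivision R barycentre ^ r) c ∈
      supported R R (smallSimplices 𝒦 ((1 - (n : ℝ)⁻¹) ^ r * D) ∩ {l | l.length = n}) := by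
  induction r with
  | zero => simpa using hc
  | succ r ih =>
    rw [pow_succ' (subdivision R barycentre), Module.End.mul_apply, pow_succ', mul_assoc]
    refine subdivision_mem_supported ?_ ih
    rintro l ⟨⟨⟨K, hK, hl⟩, hD⟩, rfl⟩ l' h
    refine ⟨⟨⟨K, hK, fun x hx => ?_⟩, fun x hx y hy => h.dist_le hD hx hy⟩, h.length_eq⟩
    exact convexHull_min (fun y hy => hl y hy) (h𝒦 K hK) (h.mem_convexHull hx)

end Barycentric

/-! ### Labellings -/

section Labels

variable {E Y Λ : Type*} [Fintype Λ]

open Classical in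
/-- All labels occurring at the vertices of an ordered simplex, where `A` assigns to every point a
set of labels. -/
def labels (A : E → Finset Λ) (l : List E) : Finset Λ :=
  Finset.univ.filter fun p => ∃ v ∈ l, p ∈ A v

lemma mem_labels {A : E → Finset Λ} {l : List E} {p : Λ} :
    p ∈ labels A l ↔ ∃ v ∈ l, p ∈ A v := by
  simp [labels]

lemma labels_nonempty {A : E → Finset Λ} {l : List E} (hl : l ≠ [])
    (hA : ∀ v ∈ l, (A v).Nonempty) : (labels A l).Nonempty := by
  obtain ⟨v, hv⟩ := List.exists_mem_of_ne_nil l hl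
  obtain ⟨p, hp⟩ := hA v hv
  exact ⟨p, mem_labels.2 ⟨v, hv, hp⟩⟩

lemma IsFlagImage.length_le_card_labels {A : E → Finset Λ} {b : Finset Λ → Y} {l : List E}
    {l' : List Y} (h : IsFlagImage (fun l => b (labels A l)) l l')
    (hA : ∀ v ∈ l, (A v).Nonempty) (hl' : l'.IsChain (· ≠ ·)) :
    l.length ≤ (labels A l).card := by
  induction h with
  | nil => exact Nat.zero_le _
  | @cons l l' i hi h ih =>
    have hmem : ∀ v ∈ l.eraseIdx i, v ∈ l := fun _ => List.mem_of_mem_eraseIdx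
    have hlen : l.length = (l.eraseIdx i).length + 1 := by grind
    have hface := ih (fun v hv => hA v (hmem v hv)) hl'.tail
    generalize l.eraseIdx i = m at h hmem hlen hface
    rw [hlen, Nat.succ_le_iff]
    cases h with
    | nil => exact (labels_nonempty (List.ne_nil_of_length_pos (by omega)) hA).card_pos
    | cons _ _ =>
      refine hface.trans_lt (Finset.card_lt_card (Finset.ssubset_iff_subset_ne.2 ⟨?_, ?_⟩))
      · intro p hp
        obtain ⟨v, hv, hp⟩ := mem_labels.1 hp
        exact mem_labels.2 ⟨v, hmem v hv, hp⟩
      · exact fun heq => (List.isChain_cons_cons.1 hl').1 (congrArg b heq.symm)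

end Labels

section Sign

variable {q : ℕ} [Fact q.Prime]

lemma card_le_of_forall_exists_notMem {ι : Type*} [Fintype ι] {A : Finset (ι × ZMod q)}
    (hfull : ∀ k, ∃ j, (k, j) ∉ A) : A.card ≤ Fintype.card ι * (q - 1) := by
  choose j hj using hfull
  calc A.card ≤ (Finset.univ.sigma fun k => {j k}ᶜ).card := by
        refine Finset.card_le_card_of_injOn (fun p => ⟨p.1, p.2⟩) (fun p hp => ?_) ?_
        · have : p.2 ≠ j p.1 := fun h => hj p.1 (h ▸ hp)
          simpa using this
        · exact fun p _ p' _ h => by grind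
    _ = Fintype.card ι * (q - 1) := by
        simp [Finset.card_compl, ZMod.card]

/-- The average of a set of colours, meaningful if the set is neither empty nor full, so that its
cardinality is invertible modulo `q`. -/
def meanColour (s : Finset (ZMod q)) : ZMod q := (∑ j ∈ s, j) / s.card

lemma meanColour_map_addRight {s : Finset (ZMod q)} (hs : s.Nonempty) (hs' : s ≠ Finset.univ)
    (t : ZMod q) : meanColour (s.map (Equiv.addRight t).toEmbedding) = meanColour s + t := by
  have hlt : s.card < q := by
    simpa [ZMod.card] using Finset.card_lt_card (Finset.ssubset_univ_iff.2 hs')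
  have hcard : (s.card : ZMod q) ≠ 0 := by
    rw [Ne, ZMod.natCast_eq_zero_iff]
    exact Nat.not_dvd_of_pos_of_lt hs.card_pos hlt
  simp only [meanColour, Finset.card_map, Finset.sum_map, Equiv.coe_toEmbedding,
    Equiv.coe_addRight, Finset.sum_add_distrib, Finset.sum_const, nsmul_eq_mul]
  field_simp

variable {ι : Type*} [DecidableEq ι]

/-- The colours that occur in the row `k` of the array of labels `A`. -/
def row (A : Finset (ι × ZMod q)) (k : ι) : Finset (ZMod q) :=
  Finset.univ.filter fun j => (k, j) ∈ A

/-- The mean colour of some nonempty row of `A`; which row is chosen depends only on the set of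
nonempty rows. -/
def sign (A : Finset (ι × ZMod q)) : ZMod q :=
  if h : (A.image Prod.fst).Nonempty then meanColour (row A h.choose) else 0

lemma sign_translate {A A' : Finset (ι × ZMod q)} {t : ZMod q}
    (h : ∀ k j, (k, j + t) ∈ A' ↔ (k, j) ∈ A) (hA : A.Nonempty)
    (hfull : ∀ k, ∃ j, (k, j) ∉ A) : sign A' = sign A + t := by
  have h' (k : ι) (j : ZMod q) : (k, j) ∈ A' ↔ (k, j - t) ∈ A := by
    rw [← h, sub_add_cancel]
  have hrow (k : ι) : row A' k = (row A k).map (Equiv.addRight t).toEmbedding := by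
    ext j
    simp [row, h', sub_eq_add_neg, Finset.mem_map_equiv]
  have himage : A'.image Prod.fst = A.image Prod.fst := by
    ext k
    simp only [Finset.mem_image, Prod.exists, exists_and_right, exists_eq_right, h']
    exact (Equiv.subRight t).exists_congr_left.trans (by simp)
  have hs : (A.image Prod.fst).Nonempty := hA.image _
  simp only [sign, himage, dif_pos hs, hrow]
  refine meanColour_map_addRight ?_ ?_ t
  · obtain ⟨⟨k, j⟩, hj, hk⟩ := Finset.mem_image.1 hs.choose_spec
    exact ⟨j, by simpa [row, ← hk] using hj⟩
  · obtain ⟨j, hj⟩ := hfull hs.choose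
    exact fun huniv => hj (by simpa [row] using Finset.eq_univ_iff_forall.1 huniv j)

end Sign

section FullRow

variable {q : ℕ} [Fact q.Prime] {R : Type*} [CommRing R] {E ι : Type*} [Fintype ι]

lemma sign_labels_map [DecidableEq ι] {s : E → E} {A : E → Finset (ι × ZMod q)} {t : ZMod q}
    (hA : ∀ x k j, (k, j + t) ∈ A (s x) ↔ (k, j) ∈ A x) {l : List E} (hne : (labels A l).Nonempty)
    (hfull : ∀ k, ∃ j, (k, j) ∉ labels A l) :
    sign (labels A (l.map s)) = sign (labels A l) + t :=
  sign_translate (fun k j => by simp [mem_labels, hA]) hne hfull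

-- Otherwise `sign` would be equivariant on the faces of the simplices in `P`, and would transport
-- the partial resolution to `ZMod q`. The image of its top generator is degenerate, because along a
-- flag of more than `card ι * (q - 1)` faces the set of labels must stabilize somewhere.
theorem IsPartialResolution.exists_full_row [Nontrivial R] [CharP R q] {s : ZMod q → E → E} {N : ℕ}
    {y : ℕ → List E →₀ R} (hy : IsPartialResolution s N y) {P : Set (List E)}
    (hP : ∀ l ∈ P, ∀ i : ℕ, l.eraseIdx i ∈ P)
    (hyP : ∀ n ≤ N, y n ∈ supported R R (P ∩ {l | l.length = n + 1}))
    {A : E → Finset (ι × ZMod q)} (hA : ∀ t x k j, (k, j + t) ∈ A (s t x) ↔ (k, j) ∈ A x)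
    (hne : ∀ l ∈ P, ∀ v ∈ l, (A v).Nonempty) (hN : Fintype.card ι * (q - 1) ≤ N) :
    ∃ l ∈ P, l ≠ [] ∧ ∃ k, ∀ j, (k, j) ∈ labels A l := by
  classical
  by_contra! hfull
  let b : List E → ZMod q := fun l => sign (labels A l)
  have hresolution : IsPartialResolution (fun t a => a + t) N fun n => subdivision R b (y n) :=
    hy.map (boundary_subdivision b) (by simp) fun n hn t =>
      subdivision_vertexMap hP
        (fun l hl hl' => sign_labels_map (hA t) (labels_nonempty hl' (hne l hl)) (hfull l hl hl'))
        (supported_mono Set.inter_subset_left (hyP n hn))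
  refine hresolution.notMem_degenerateChains (subdivision_mem_supported ?_ (hyP N le_rfl))
  rintro l ⟨hl, hlen⟩ l' hflag
  refine Or.inr fun hl' => ?_
  have hle := hflag.length_le_card_labels (hne l hl) hl'
  have hcard := card_le_of_forall_exists_notMem
    (hfull l hl (List.ne_nil_of_length_eq_add_one hlen))
  rw [hlen] at hle
  omega

end FullRow

/-! ### Diagonal values of equivariant maps -/

section Diagonal

variable {ι κ : Type*}

/-- The diagonal of the `ι`-fold power of `κ → ℝ`, whose elements are constant on every row. -/
def IsDiagonal (y : ι × κ → ℝ) : Prop := ∀ k j j', y (k, j) = y (k, j')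

variable [Fintype ι] [Fintype κ]

open Classical in
/-- The positions where `y` exceeds some other value in the same row by at least `ε`. -/
def peaks (ε : ℝ) (y : ι × κ → ℝ) : Finset (ι × κ) :=
  Finset.univ.filter fun p => ∃ j, y (p.1, j) + ε ≤ y p

lemma mem_peaks {ε : ℝ} {y : ι × κ → ℝ} {k : ι} {j : κ} :
    (k, j) ∈ peaks ε y ↔ ∃ j', y (k, j') + ε ≤ y (k, j) := by
  simp [peaks]

lemma exists_pos_forall_peaks_nonempty {E : Type*} [TopologicalSpace E] {K : Set E}
    (hK : IsCompact K) {G : E → ι × κ → ℝ} (hG : ContinuousOn G K)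
    (h : ∀ x ∈ K, ¬ IsDiagonal (G x)) : ∃ ε > 0, ∀ x ∈ K, (peaks ε (G x)).Nonempty := by
  let spread (x : E) (p : ι × κ × κ) : ℝ := G x (p.1, p.2.1) - G x (p.1, p.2.2)
  have hpos : ∀ x ∈ K, 0 < ‖spread x‖ := fun x hx => norm_pos_iff.2 fun h0 =>
    h x hx fun k j j' => sub_eq_zero.1 (congrFun h0 (k, j, j'))
  have hcont : ContinuousOn spread K := by
    have hG' := continuousOn_pi.1 hG
    exact continuousOn_pi.2 fun p => (hG' _).sub (hG' _)
  obtain ⟨ε, hε, hle⟩ := hK.exists_forall_le' hcont.norm hpos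
  refine ⟨ε, hε, fun x hx => ?_⟩
  obtain ⟨⟨k, j, j'⟩, hkj⟩ : ∃ p, ε ≤ ‖spread x p‖ := by
    by_contra! hlt
    exact (hle x hx).not_gt ((pi_norm_lt_iff hε).2 hlt)
  rcases le_abs.1 hkj with hkj | hkj
  · exact ⟨(k, j), mem_peaks.2 ⟨j', by simp only [spread] at hkj; linarith⟩⟩
  · exact ⟨(k, j'), mem_peaks.2 ⟨j, by simp only [spread] at hkj; linarith⟩⟩

-- At a position where the value at one vertex is minimal in its row, no other vertex can have a
-- peak.
lemma exists_notMem_labels_peaks [Nonempty κ] {E : Type*} {G : E → ι × κ → ℝ} {ε : ℝ} (hε : 0 < ε)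
    {l : List E} (hl : l ≠ []) (hG : ∀ v ∈ l, ∀ w ∈ l, dist (G v) (G w) < ε / 2) (k : ι) :
    ∃ j, (k, j) ∉ labels (fun x => peaks ε (G x)) l := by
  obtain ⟨v, hv⟩ := List.exists_mem_of_ne_nil l hl
  obtain ⟨j, hj⟩ := Finite.exists_min fun j => G v (k, j)
  refine ⟨j, fun hmem => ?_⟩
  obtain ⟨w, hw, hpeak⟩ := mem_labels.1 hmem
  obtain ⟨j', hj'⟩ := mem_peaks.1 hpeak
  have hclose (p : ι × κ) : |G v p - G w p| < ε / 2 :=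
    (dist_pi_lt_iff (half_pos hε)).1 (hG v hv w hw) p
  linarith [hj j', abs_lt.1 (hclose (k, j)), abs_lt.1 (hclose (k, j'))]

end Diagonal

section AffineGenerator

variable {R : Type*} [CommRing R] {q N : ℕ}

/-- The linear automorphism of `ℝ ^ (Fin (N + 1) × ZMod q)` that moves the coordinate of index `i`
and colour `a` to the colour `a + s i`. -/
def shift (s : Fin (N + 1) → ZMod q) :
    (Fin (N + 1) × ZMod q → ℝ) →ₗ[ℝ] (Fin (N + 1) × ZMod q → ℝ) :=
  LinearMap.funLeft ℝ ℝ fun p => (p.1, p.2 - s p.1)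

/-- The vertex of the standard simplex with the given index and colour, and the origin if the
index is out of range. -/
def vertex (v : ℕ × ZMod q) : Fin (N + 1) × ZMod q → ℝ :=
  fun p => if (p.1 : ℕ) = v.1 ∧ p.2 = v.2 then 1 else 0

lemma shift_apply_add (s : Fin (N + 1) → ZMod q) (x : Fin (N + 1) × ZMod q → ℝ) (i : Fin (N + 1))
    (j : ZMod q) : shift s x (i, j + s i) = x (i, j) := by
  simp [shift, LinearMap.funLeft_apply]

lemma shift_shift (s t : Fin (N + 1) → ZMod q) (x : Fin (N + 1) × ZMod q → ℝ) :
    shift s (shift t x) = shift (s + t) x := by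
  ext p
  simp [shift, LinearMap.funLeft_apply, sub_sub]

lemma shift_const_vertex (t : ZMod q) (v : ℕ × ZMod q) :
    shift (fun _ => t) (vertex (N := N) v) = vertex (recolour t v) := by
  ext p
  exact if_congr (by simp [recolour, sub_eq_iff_eq_add]) rfl rfl

variable [NeZero q]

/-- The face of the standard simplex spanned by the graph of the colouring `c`. -/
def cell (c : Fin (N + 1) → ZMod q) : Set (Fin (N + 1) × ZMod q → ℝ) :=
  {x ∈ stdSimplex ℝ (Fin (N + 1) × ZMod q) | ∀ p, p.2 ≠ c p.1 → x p = 0}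

variable (N q) in
/-- The maximal faces of the geometric realization of the join of the cycles. -/
def joinCells : Set (Set (Fin (N + 1) × ZMod q → ℝ)) :=
  (fun c : ℕ → ZMod q => cell fun i => c i) '' {c | IsStaircase c}

lemma shift_mem_stdSimplex (s : Fin (N + 1) → ZMod q) {x : Fin (N + 1) × ZMod q → ℝ}
    (hx : x ∈ stdSimplex ℝ (Fin (N + 1) × ZMod q)) :
    shift s x ∈ stdSimplex ℝ (Fin (N + 1) × ZMod q) := by
  refine ⟨fun p => hx.1 _, ?_⟩
  rw [← hx.2]
  exact Equiv.sum_comp (Equiv.prodShear (Equiv.refl _) fun i => Equiv.subRight (s i)) x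

lemma shift_mem_cell (s : Fin (N + 1) → ZMod q) {c : Fin (N + 1) → ZMod q}
    {x : Fin (N + 1) × ZMod q → ℝ} (hx : x ∈ cell c) : shift s x ∈ cell (c + s) :=
  ⟨shift_mem_stdSimplex s hx.1, fun _ hp => hx.2 _ fun h => hp (sub_eq_iff_eq_add.1 h)⟩

lemma convex_cell (c : Fin (N + 1) → ZMod q) : Convex ℝ (cell c) := by
  rintro x ⟨hx, hx'⟩ y ⟨hy, hy'⟩ a b ha hb hab
  refine ⟨convex_stdSimplex ℝ _ hx hy ha hb hab, fun p hp => ?_⟩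
  simp [hx' p hp, hy' p hp]

lemma isCompact_cell (c : Fin (N + 1) → ZMod q) : IsCompact (cell c) := by
  have hclosed : IsClosed {x : Fin (N + 1) × ZMod q → ℝ | ∀ p, p.2 ≠ c p.1 → x p = 0} := by
    simp only [Set.ofPred_forall]
    exact isClosed_iInter fun p => isClosed_iInter fun _ =>
      isClosed_eq (continuous_apply p) continuous_const
  exact (isCompact_stdSimplex ℝ _).inter_right hclosed

lemma vertex_mem_cell (c : Fin (N + 1) → ZMod q) (i : Fin (N + 1)) :
    vertex ((i : ℕ), c i) ∈ cell c := by
  have hsingle : vertex ((i : ℕ), c i) = Pi.single (i, c i) (1 : ℝ) := by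
    ext p
    simp [vertex, Pi.single_apply, Prod.ext_iff, Fin.ext_iff]
  rw [hsingle]
  refine ⟨single_mem_stdSimplex ℝ _, fun p hp => Pi.single_eq_of_ne ?_ _⟩
  rintro rfl
  exact hp rfl

lemma dist_le_one_of_mem_cell {c : Fin (N + 1) → ZMod q} {x y : Fin (N + 1) × ZMod q → ℝ}
    (hx : x ∈ cell c) (hy : y ∈ cell c) : dist x y ≤ 1 :=
  (dist_pi_le_iff zero_le_one).2 fun p => by
    simpa using Real.dist_le_of_mem_Icc (mem_Icc_of_mem_stdSimplex hx.1 p)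
      (mem_Icc_of_mem_stdSimplex hy.1 p)

lemma isCompact_sUnion_joinCells : IsCompact (⋃₀ joinCells q N) := by
  refine Set.Finite.isCompact_sUnion ((Set.finite_range cell).subset ?_) ?_
  all_goals rintro _ ⟨c, -, rfl⟩
  · exact Set.mem_range_self _
  · exact isCompact_cell _

lemma sUnion_joinCells_subset :
    ⋃₀ joinCells q N ⊆ stdSimplex ℝ (Fin (N + 1) × ZMod q) :=
  Set.sUnion_subset fun _ ⟨_, _, h⟩ => h ▸ Set.sep_subset _ _

variable (R q N) in
/-- The `r`-fold barycentric subdivision of `generator`, realized by affine simplices. -/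
def affineGenerator (r n : ℕ) : List (Fin (N + 1) × ZMod q → ℝ) →₀ R :=
  (subdivision R barycentre ^ r) (vertexMap R vertex (generator R q n))

lemma isPartialResolution_affineGenerator (r : ℕ) :
    IsPartialResolution (fun t => shift fun _ => t) N (affineGenerator R q N r) := by
  induction r with
  | zero =>
    refine (isPartialResolution_generator R q N).map (boundary_vertexMap vertex) (by simp) ?_
    intro n _ t
    simp only [vertexMap_vertexMap, Function.comp_def, shift_const_vertex]
  | succ r ih =>
    have hsucc (n : ℕ) : affineGenerator R q N (r + 1) n =
        subdivision R barycentre (affineGenerator R q N r n) := by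
      rw [affineGenerator, pow_succ', Module.End.mul_apply, affineGenerator]
    simp only [funext hsucc]
    exact ih.map (boundary_subdivision _) (by simp) fun n _ t =>
      subdivision_vertexMap (P := Set.univ) (by simp) (fun l _ _ => barycentre_map _ l) (by simp)

lemma affineGenerator_mem_supported (r : ℕ) {n : ℕ} (hn : n ≤ N) :
    affineGenerator R q N r n ∈ supported R R
      (smallSimplices (joinCells q N) ((1 - ((n + 1 : ℕ) : ℝ)⁻¹) ^ r) ∩
        {l | l.length = n + 1}) := by
  have hconvex : ∀ K ∈ joinCells q N, Convex ℝ K := by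
    rintro _ ⟨c, -, rfl⟩
    exact convex_cell _
  rw [← mul_one ((1 - ((n + 1 : ℕ) : ℝ)⁻¹) ^ r)]
  refine iterate_subdivision_mem_supported hconvex (vertexMap_mem_supported ?_
    (generator_mem_supported R q n)) r
  rintro l ⟨hlen, c, hc, hgraph⟩
  have hcell : ∀ x ∈ l.map vertex, x ∈ cell fun i : Fin (N + 1) => c i :=
    List.forall_mem_map.2 fun v hv => by
      obtain ⟨hlt, hcv⟩ := hgraph v hv
      simpa [hcv] using vertex_mem_cell (fun i : Fin (N + 1) => c i) ⟨v.1, by omega⟩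
  exact ⟨⟨⟨_, ⟨c, hc, rfl⟩, hcell⟩, fun x hx y hy =>
    dist_le_one_of_mem_cell (hcell x hx) (hcell y hy)⟩, by simpa using hlen⟩

variable (R q N) in
lemma exists_affineGenerator_mem_supported {δ : ℝ} (hδ : 0 < δ) :
    ∃ r, ∀ n ≤ N, affineGenerator R q N r n ∈
      supported R R (smallSimplices (joinCells q N) δ ∩ {l | l.length = n + 1}) := by
  obtain ⟨r, hr⟩ : ∃ r : ℕ, (1 - ((N + 1 : ℕ) : ℝ)⁻¹) ^ r < δ :=
    exists_pow_lt_of_lt_one hδ (sub_lt_self _ (by positivity))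
  refine ⟨r, fun n hn => supported_mono ?_ (affineGenerator_mem_supported r hn)⟩
  rintro l ⟨⟨hK, hdist⟩, hlen⟩
  refine ⟨⟨hK, fun x hx y hy => (hdist x hx y hy).trans (le_trans ?_ hr.le)⟩, hlen⟩
  have hnonneg : 0 ≤ 1 - ((n + 1 : ℕ) : ℝ)⁻¹ := sub_nonneg.2 (inv_le_one_of_one_le₀ (by simp))
  gcongr

end AffineGenerator

section ExistsDiagonal

lemma eraseIdx_mem_smallSimplices {E : Type*} [SeminormedAddCommGroup E] {𝒦 : Set (Set E)} {D : ℝ}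
    {l : List E} (hl : l ∈ smallSimplices 𝒦 D) (i : ℕ) : l.eraseIdx i ∈ smallSimplices 𝒦 D := by
  obtain ⟨⟨K, hK, hlK⟩, hdist⟩ := hl
  have hmem : ∀ x ∈ l.eraseIdx i, x ∈ l := fun _ => List.mem_of_mem_eraseIdx
  exact ⟨⟨K, hK, fun x hx => hlK x (hmem x hx)⟩,
    fun x hx y hy => hdist x (hmem x hx) y (hmem y hy)⟩

variable {q N : ℕ} {ι : Type*}

/-- Equivariance with respect to the translation of the colours. -/
def IsEquivariant (G : (Fin (N + 1) × ZMod q → ℝ) → ι × ZMod q → ℝ) : Prop :=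
  ∀ t x k j, G (shift (fun _ => t) x) (k, j + t) = G x (k, j)

lemma IsEquivariant.comp_shift {G : (Fin (N + 1) × ZMod q → ℝ) → ι × ZMod q → ℝ}
    (hG : IsEquivariant G) (s : Fin (N + 1) → ZMod q) : IsEquivariant fun x => G (shift s x) :=
  fun t x k j => by
    simpa only [shift_shift, add_comm s] using hG t (shift s x) k j

lemma IsEquivariant.isDiagonal_shift {G : (Fin (N + 1) × ZMod q → ℝ) → ι × ZMod q → ℝ}
    (hG : IsEquivariant G) {x : Fin (N + 1) × ZMod q → ℝ} (hx : IsDiagonal (G x)) (t : ZMod q) :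
    IsDiagonal (G (shift (fun _ => t) x)) := fun k j j' => by
  rw [← sub_add_cancel j t, ← sub_add_cancel j' t, hG, hG, hx]

variable [Fact q.Prime] [Fintype ι]

lemma IsEquivariant.mem_peaks_shift {G : (Fin (N + 1) × ZMod q → ℝ) → ι × ZMod q → ℝ}
    (hG : IsEquivariant G) (ε : ℝ) (t : ZMod q) (x : Fin (N + 1) × ZMod q → ℝ) (k : ι)
    (j : ZMod q) :
    (k, j + t) ∈ peaks ε (G (shift (fun _ => t) x)) ↔ (k, j) ∈ peaks ε (G x) := by
  simp only [mem_peaks, hG t x]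
  exact (Equiv.addRight t).surjective.exists.trans (by simp [hG t x])

-- The labels `peaks ε (G x)` are equivariant, and nonempty if `G` stays away from the diagonal. On
-- a simplex so small that `G` hardly varies they cannot fill a row.
theorem IsEquivariant.exists_isStaircase_isDiagonal
    {G : (Fin (N + 1) × ZMod q → ℝ) → ι × ZMod q → ℝ} (hG : IsEquivariant G)
    (hcont : ContinuousOn G (stdSimplex ℝ (Fin (N + 1) × ZMod q)))
    (hN : Fintype.card ι * (q - 1) ≤ N) :
    ∃ c, IsStaircase c ∧ ∃ x ∈ cell fun i : Fin (N + 1) => c i, IsDiagonal (G x) := by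
  by_contra! hcon
  have hdiag : ∀ x ∈ ⋃₀ joinCells q N, ¬ IsDiagonal (G x) := by
    rintro x ⟨_, ⟨c, hc, rfl⟩, hx⟩
    exact hcon c hc x hx
  obtain ⟨ε, hε, hpeaks⟩ := exists_pos_forall_peaks_nonempty isCompact_sUnion_joinCells
    (hcont.mono sUnion_joinCells_subset) hdiag
  obtain ⟨δ, hδ, hunif⟩ := Metric.uniformContinuousOn_iff_le.1
    ((isCompact_stdSimplex ℝ _).uniformContinuousOn_of_continuous hcont) (ε / 3) (by positivity)
  obtain ⟨r, hr⟩ := exists_affineGenerator_mem_supported (ZMod q) q N hδ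
  obtain ⟨l, ⟨⟨K, hK, hlK⟩, hdist⟩, hl, k, hk⟩ :=
    (isPartialResolution_affineGenerator r).exists_full_row
      (fun l hl i => eraseIdx_mem_smallSimplices hl i) hr (hG.mem_peaks_shift ε)
      (fun l ⟨⟨K, hK, hlK⟩, _⟩ v hv => hpeaks v ⟨K, hK, hlK v hv⟩) hN
  have hsimplex : ∀ v ∈ l, v ∈ stdSimplex ℝ (Fin (N + 1) × ZMod q) := fun v hv =>
    sUnion_joinCells_subset ⟨K, hK, hlK v hv⟩
  obtain ⟨j, hj⟩ := exists_notMem_labels_peaks hε hl (fun v hv w hw =>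
    (hunif v (hsimplex v hv) w (hsimplex w hw) (hdist v hv w hw)).trans_lt (by linarith)) k
  exact hj (hk j)

lemma IsEquivariant.exists_isStaircase_sub_isDiagonal
    {G : (Fin (N + 1) × ZMod q → ℝ) → ι × ZMod q → ℝ} (hG : IsEquivariant G)
    (hcont : ContinuousOn G (stdSimplex ℝ (Fin (N + 1) × ZMod q)))
    (hN : Fintype.card ι * (q - 1) ≤ N) (s : Fin (N + 1) → ZMod q) :
    ∃ c, IsStaircase c ∧ ∃ x ∈ cell fun i : Fin (N + 1) => c i + s i, IsDiagonal (G x) := by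
  obtain ⟨c, hc, x, hx, hdiag⟩ := (hG.comp_shift s).exists_isStaircase_isDiagonal
    (hcont.comp (shift s).continuous_of_finiteDimensional.continuousOn
      fun x hx => shift_mem_stdSimplex s hx) hN
  exact ⟨c, hc, _, shift_mem_cell s hx, hdiag⟩

end ExistsDiagonal

/-! ### Counting colourings -/

section Counting

variable {q : ℕ} [NeZero q] {N : ℕ}

-- Up to translation, it suffices to take for `s` the functions that vanish at the even indices. A
-- colouring `c + s` determines such an `s` up to the differences `c (2 * m + 1) - c (2 * m)`, each
-- of which is `0` or `1`.
theorem pow_le_card_mul_two_pow {C : Finset (Fin (N + 1) → ZMod q)}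
    (hC : ∀ c ∈ C, ∀ t, (fun i => c i + t) ∈ C)
    (h : ∀ s : Fin (N + 1) → ZMod q, ∃ c, IsStaircase c ∧ (fun i : Fin (N + 1) => c i + s i) ∈ C) :
    q ^ ((N + 1) / 2 + 1) ≤ C.card * 2 ^ ((N + 1) / 2) := by
  let even (m : Fin ((N + 1) / 2)) : Fin (N + 1) := ⟨2 * m, by omega⟩
  let odd (m : Fin ((N + 1) / 2)) : Fin (N + 1) := ⟨2 * m + 1, by omega⟩
  let F (p : C × (Fin ((N + 1) / 2) → Bool)) : ZMod q × (Fin ((N + 1) / 2) → ZMod q) :=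
    (p.1.1 0, fun m => p.1.1 (odd m) - p.1.1 (even m) - if p.2 m then 1 else 0)
  have hF : Function.Surjective F := by
    rintro ⟨t, a⟩
    let s (i : Fin (N + 1)) : ZMod q := if hi : Odd (i : ℕ) then a ⟨i / 2, by grind⟩ else 0
    have hs_odd (m : Fin ((N + 1) / 2)) : s (odd m) = a m := by
      simp only [s, odd, odd_two_mul_add_one, dif_pos]
      grind
    have hs_even (m : Fin ((N + 1) / 2)) : s (even m) = 0 := by simp [s, even]
    obtain ⟨c, hc, hmem⟩ := h s
    refine ⟨(⟨_, hC _ hmem (t - (c 0 + s 0))⟩, fun m => c (2 * m + 1) ≠ c (2 * m)), ?_⟩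
    refine Prod.ext (by simp [F]) (funext fun m => ?_)
    simp only [F, hs_odd, hs_even]
    rcases eq_or_ne (c (2 * m + 1)) (c (2 * m)) with heq | hne
    · simp [odd, even, heq]
    · simp only [odd, even, ne_eq, hne, not_false_eq_true, decide_true, if_true]
      rw [(hc m).resolve_left hne]
      ring
  simpa [pow_succ'] using Fintype.card_le_of_surjective F hF

/-- The set of colour classes of a colouring. -/
def colourClasses (c : Fin (N + 1) → ZMod q) : Finset (Finset (Fin (N + 1))) :=
  Finset.univ.image fun j => Finset.univ.filter fun i => c i = j

lemma filter_mem_colourClasses (c : Fin (N + 1) → ZMod q) (j : ZMod q) :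
    (Finset.univ.filter fun i => c i = j) ∈ colourClasses c :=
  Finset.mem_image_of_mem _ (Finset.mem_univ j)

-- Such a colouring is determined by the bijection between the colours and their classes.
lemma card_filter_colourClasses_le (C : Finset (Fin (N + 1) → ZMod q))
    {P : Finset (Finset (Fin (N + 1)))} (hP : P.card = q) :
    (C.filter fun c => colourClasses c = P).card ≤ q.factorial := by
  have hinj (c : Fin (N + 1) → ZMod q) (hc : colourClasses c = P) :
      Function.Injective fun j => Finset.univ.filter fun i => c i = j := by
    have hcard : (colourClasses c).card = (Finset.univ : Finset (ZMod q)).card := by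
      rw [hc, hP, Finset.card_univ, ZMod.card]
    simpa using Finset.injOn_of_card_image_eq hcard
  have hclasses (c : {c // c ∈ C.filter fun c => colourClasses c = P}) : colourClasses c.1 = P :=
    (Finset.mem_filter.1 c.2).2
  let F (c : {c // c ∈ C.filter fun c => colourClasses c = P}) : ZMod q ↪ P :=
    ⟨fun j => ⟨_, (hclasses c).subset (filter_mem_colourClasses c.1 j)⟩,
      fun j j' h => hinj c.1 (hclasses c) (Subtype.ext_iff.1 h)⟩
  have hF : Function.Injective F := by
    intro c c' h
    ext i : 2
    have hclass : (Finset.univ.filter fun i' => c.1 i' = c.1 i) =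
        Finset.univ.filter fun i' => c'.1 i' = c.1 i :=
      Subtype.ext_iff.1 (DFunLike.congr_fun h (c.1 i))
    simpa [eq_comm] using Finset.ext_iff.1 hclass i
  have := Fintype.card_le_of_injective F hF
  rwa [Fintype.card_coe, Fintype.card_embedding_eq, Fintype.card_coe, hP, ZMod.card,
    Nat.descFactorial_self] at this

end Counting

/-! ### The test map -/

section Homogenize

variable {ι F : Type*} [Fintype ι] [NormedAddCommGroup F] [NormedSpace ℝ F]

/-- The positively homogeneous extension to the nonnegative orthant of a map on the standard
simplex. It vanishes at `0`, since `∑ i, y i = 0` there. -/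
def homogenize (f : (ι → ℝ) → F) (y : ι → ℝ) : F :=
  (∑ i, y i) • f ((∑ i, y i)⁻¹ • y)

lemma inv_sum_smul_mem_stdSimplex {y : ι → ℝ} (hy : 0 ≤ y) (h : ∑ i, y i ≠ 0) :
    (∑ i, y i)⁻¹ • y ∈ stdSimplex ℝ ι := by
  refine ⟨fun i => mul_nonneg (inv_nonneg.2 (Finset.sum_nonneg fun i _ => hy i)) (hy i), ?_⟩
  simp only [Pi.smul_apply, smul_eq_mul, ← Finset.mul_sum]
  exact inv_mul_cancel₀ h

lemma norm_homogenize_le {f : (ι → ℝ) → F} {B : ℝ} (hB : ∀ x ∈ stdSimplex ℝ ι, ‖f x‖ ≤ B)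
    {y : ι → ℝ} (hy : 0 ≤ y) : ‖homogenize f y‖ ≤ (∑ i, y i) * B := by
  have hsum : 0 ≤ ∑ i, y i := Finset.sum_nonneg fun i _ => hy i
  rw [homogenize, norm_smul, Real.norm_of_nonneg hsum]
  rcases eq_or_ne (∑ i, y i) 0 with h | h
  · simp [h]
  · exact mul_le_mul_of_nonneg_left (hB _ (inv_sum_smul_mem_stdSimplex hy h)) hsum

lemma continuousOn_homogenize {f : (ι → ℝ) → F} (hf : ContinuousOn f (stdSimplex ℝ ι)) :
    ContinuousOn (homogenize f) (Set.Ici 0) := by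
  have hsum : Continuous fun y : ι → ℝ => ∑ i, y i := by fun_prop
  intro y hy
  by_cases h : ∑ i, y i = 0
  · obtain ⟨B, hB⟩ := (isCompact_stdSimplex ℝ ι).exists_bound_of_continuousOn hf
    have hbound : Filter.Tendsto (fun z : ι → ℝ => (∑ i, z i) * B) (nhdsWithin y (Set.Ici 0))
        (nhds 0) := by
      have hcont : Continuous fun z : ι → ℝ => (∑ i, z i) * B := by fun_prop
      simpa [h] using (hcont.tendsto y).mono_left nhdsWithin_le_nhds
    rw [ContinuousWithinAt, show homogenize f y = 0 by simp [homogenize, h]]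
    refine squeeze_zero_norm' ?_ hbound
    filter_upwards [self_mem_nhdsWithin] with z hz using norm_homogenize_le hB hz
  · have hne : ∀ᶠ z in nhdsWithin y (Set.Ici 0), ∑ i, z i ≠ 0 :=
      nhdsWithin_le_nhds ((isOpen_ne.preimage hsum).mem_nhds h)
    rw [← continuousWithinAt_inter' hne]
    refine hsum.continuousWithinAt.smul ?_
    refine ContinuousWithinAt.comp (t := stdSimplex ℝ ι) (hf _ (inv_sum_smul_mem_stdSimplex hy h))
      ?_ fun z hz => inv_sum_smul_mem_stdSimplex hz.1 hz.2
    exact (hsum.continuousAt.inv₀ h).continuousWithinAt.smul continuousWithinAt_id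

end Homogenize

section TestMap

variable {q N d : ℕ}

/-- The test map associated with `f`. Its rows are the total weight of every colour, and the
coordinates of the homogenized value of `f` on every colour. -/
def testMap (f : (Fin (N + 1) → ℝ) → Euc d) (x : Fin (N + 1) × ZMod q → ℝ) :
    Option (Fin d) × ZMod q → ℝ
  | (.none, j) => ∑ i, x (i, j)
  | (.some k, j) => homogenize f (fun i => x (i, j)) k

lemma isEquivariant_testMap (f : (Fin (N + 1) → ℝ) → Euc d) :
    IsEquivariant (testMap (q := q) f) := by
  intro t x k j
  have hcolour (i : Fin (N + 1)) : shift (fun _ => t) x (i, j + t) = x (i, j) :=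
    shift_apply_add (fun _ => t) x i j
  cases k <;> simp only [testMap, hcolour]

variable [NeZero q]

lemma continuousOn_testMap {f : (Fin (N + 1) → ℝ) → Euc d} (hf : ContinuousOn f (stdSimp N)) :
    ContinuousOn (testMap (q := q) f) (stdSimplex ℝ (Fin (N + 1) × ZMod q)) := by
  refine continuousOn_pi.2 ?_
  rintro ⟨_ | k, j⟩
  · simp only [testMap]
    fun_prop
  · have hcomp := (continuousOn_homogenize hf).comp
      (f := fun (x : Fin (N + 1) × ZMod q → ℝ) i => x (i, j))
      (s := stdSimplex ℝ (Fin (N + 1) × ZMod q)) (by fun_prop) fun x hx i => hx.1 _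
    exact (EuclideanSpace.proj (𝕜 := ℝ) k).continuous.comp_continuousOn hcomp

lemma nonempty_of_mem_simpFace {S : Finset (Fin (N + 1))} {y : Fin (N + 1) → ℝ}
    (hy : y ∈ simpFace S) : S.Nonempty := by
  rw [Finset.nonempty_iff_ne_empty]
  rintro rfl
  have hsum := hy.1.2
  simp [hy.2] at hsum

lemma isTverbergPartition_colourClasses {f : (Fin (N + 1) → ℝ) → Euc d} {c : Fin (N + 1) → ZMod q}
    {y : ZMod q → Fin (N + 1) → ℝ} (hy : ∀ j, y j ∈ simpFace (Finset.univ.filter fun i => c i = j))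
    (hf : ∀ j, f (y j) = f (y 0)) : IsTverbergPartition q f (colourClasses c) := by
  have hclass (j : ZMod q) : ∃ i, c i = j := by
    simpa [Finset.Nonempty] using nonempty_of_mem_simpFace (hy j)
  refine ⟨?_, ?_, ?_, f (y 0), ?_⟩
  · rw [colourClasses, Finset.card_image_of_injective, Finset.card_univ, ZMod.card]
    intro j j' h
    obtain ⟨i, rfl⟩ := hclass j
    simpa using Finset.ext_iff.1 h i
  all_goals simp only [colourClasses, Finset.forall_mem_image, Finset.mem_univ, true_imp_iff,
    Set.mem_iInter₂]
  · exact fun j => nonempty_of_mem_simpFace (hy j)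
  · intro j j' hne
    exact Finset.disjoint_filter.2 fun i _ hi hi' => hne (by rw [← hi, ← hi'])
  · exact fun j => ⟨y j, hy j, hf j⟩

lemma isTverbergPartition_of_isDiagonal {f : (Fin (N + 1) → ℝ) → Euc d}
    {c : Fin (N + 1) → ZMod q} {x : Fin (N + 1) × ZMod q → ℝ} (hx : x ∈ cell c)
    (hdiag : IsDiagonal (testMap f x)) : IsTverbergPartition q f (colourClasses c) := by
  have hsum (j : ZMod q) : ∑ i, x (i, j) = ∑ i, x (i, 0) := hdiag .none j 0
  have hne (j : ZMod q) : ∑ i, x (i, j) ≠ 0 := fun h => by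
    have htotal := hx.1.2
    rw [Fintype.sum_prod_type_right] at htotal
    simp [fun j' => (hsum j').trans ((hsum j).symm.trans h)] at htotal
  refine isTverbergPartition_colourClasses (y := fun j => (∑ i, x (i, j))⁻¹ • fun i => x (i, j))
    (fun j => ⟨inv_sum_smul_mem_stdSimplex (fun i => hx.1.1 _) (hne j), fun i hi => ?_⟩)
    fun j => ?_
  · have hzero : x (i, j) = 0 := hx.2 (i, j) fun h => hi (by simp [show j = c i from h])
    simp [hzero]
  · have hval : homogenize f (fun i => x (i, j)) = homogenize f (fun i => x (i, 0)) := by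
      ext k
      exact hdiag (.some k) j 0
    simp only [homogenize, hsum j] at hval ⊢
    exact smul_right_injective _ (hne 0) hval

end TestMap

lemma pow_le_factorial_mul_ncard_mul_two_pow {q N d : ℕ} [Fact q.Prime]
    (hN : (d + 1) * (q - 1) ≤ N) {f : (Fin (N + 1) → ℝ) → Euc d}
    (hf : ContinuousOn f (stdSimp N)) :
    q ^ ((N + 1) / 2) ≤
      (q - 1).factorial * {P | IsTverbergPartition q f P}.ncard * 2 ^ ((N + 1) / 2) := by
  classical
  let C : Finset (Fin (N + 1) → ZMod q) :=
    Finset.univ.filter fun c => ∃ x ∈ cell c, IsDiagonal (testMap f x)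
  have hmem (c : Fin (N + 1) → ZMod q) : c ∈ C ↔ ∃ x ∈ cell c, IsDiagonal (testMap f x) := by
    simp [C]
  have hG := isEquivariant_testMap (q := q) f
  have hlower : q ^ ((N + 1) / 2 + 1) ≤ C.card * 2 ^ ((N + 1) / 2) := by
    refine pow_le_card_mul_two_pow (fun c hc t => ?_) fun s => ?_
    · obtain ⟨x, hx, hdiag⟩ := (hmem c).1 hc
      exact (hmem _).2 ⟨_, shift_mem_cell (fun _ => t) hx, hG.isDiagonal_shift hdiag t⟩
    · obtain ⟨c, hc, hx⟩ :=
        hG.exists_isStaircase_sub_isDiagonal (continuousOn_testMap hf) (by simpa using hN) s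
      exact ⟨c, hc, (hmem _).2 hx⟩
  have hupper : C.card ≤ q.factorial * {P | IsTverbergPartition q f P}.ncard := by
    rw [Set.ncard_eq_toFinset_card']
    refine Finset.card_le_mul_card_image_of_maps_to (f := colourClasses) (fun c hc => ?_) _
      fun P hP => ?_
    · obtain ⟨x, hx, hdiag⟩ := (hmem c).1 hc
      exact Set.mem_toFinset.2 (isTverbergPartition_of_isDiagonal hx hdiag)
    · exact card_filter_colourClasses_le C (Set.mem_toFinset.1 hP).1
  have hq := (Fact.out : q.Prime)
  refine Nat.le_of_mul_le_mul_left ?_ hq.pos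
  calc q * q ^ ((N + 1) / 2)
      ≤ C.card * 2 ^ ((N + 1) / 2) := by rwa [← pow_succ']
    _ ≤ q.factorial * {P | IsTverbergPartition q f P}.ncard * 2 ^ ((N + 1) / 2) :=
        Nat.mul_le_mul_right _ hupper
    _ = q * ((q - 1).factorial * {P | IsTverbergPartition q f P}.ncard * 2 ^ ((N + 1) / 2)) := by
        rw [← Nat.mul_factorial_pred hq.ne_zero]; ring

end Tverberg

theorem vucic_zivaljevic_general {q d N : ℕ} (hq : q.Prime) (hN : (d + 1) * (q - 1) ≤ N)
    {f : (Fin (N + 1) → ℝ) → Euc d} (hf : ContinuousOn f (stdSimp N)) :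
    1 / ((q - 1).factorial : ℝ) * ((q : ℝ) / 2) ^ ((N : ℝ) / 2) ≤
      ({P : Finset (Finset (Fin (N + 1))) | IsTverbergPartition q f P}.ncard : ℝ) := by
  have : Fact q.Prime := ⟨hq⟩
  have hexp : (N : ℝ) / 2 ≤ ((N + 1) / 2 : ℕ) := by
    rw [div_le_iff₀ two_pos]
    exact_mod_cast (by omega : N ≤ (N + 1) / 2 * 2)
  have hbase : (1 : ℝ) ≤ (q : ℝ) / 2 := by
    rw [le_div_iff₀ two_pos, one_mul]
    exact_mod_cast hq.two_le
  rw [one_div, inv_mul_le_iff₀ (by positivity)]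
  calc ((q : ℝ) / 2) ^ ((N : ℝ) / 2)
      ≤ ((q : ℝ) / 2) ^ ((N + 1) / 2) := by
        rw [← Real.rpow_natCast]
        gcongr
    _ ≤ (q - 1).factorial * ({P | IsTverbergPartition q f P}.ncard : ℝ) := by
        rw [div_pow, div_le_iff₀ (by positivity)]
        exact_mod_cast Tverberg.pow_le_factorial_mul_ncard_mul_two_pow hN hf

/-- **Vučić–Živaljević bound.** For prime `q`, every continuous map
`Δ^{(d+1)(q-1)} → ℝ^d` has at least `(1/(q-1)!) · (q/2)^{(d+1)(q-1)/2}`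
Tverberg partitions. -/
theorem vucic_zivaljevic (q d : ℕ) (hq : q.Prime) (hd : 1 ≤ d)
    (f : (Fin ((d+1)*(q-1)+1) → ℝ) → Euc d)
    (hf : ContinuousOn f (stdSimp ((d+1)*(q-1)))) :
    (1 / (Nat.factorial (q-1) : ℝ)) * ((q : ℝ)/2) ^ ((((d+1)*(q-1) : ℕ) : ℝ)/2) ≤
      (({P : Finset (Finset (Fin ((d+1)*(q-1)+1))) |
          IsTverbergPartition q f P}.ncard : ℕ) : ℝ) :=
  vucic_zivaljevic_general hq le_rfl hf
end
end

section
/- For all integers d ≥ 1 and q ≥ 1, the following two statements are equivalent: (i) every continuous map f : Δ_d^{(d+1)(q-1)} → ℝ^d admits a Tverberg partition {S_1, …, S_q} with |S_i| ≤ d+1 for all i (the d-Skeleton Conjecture); (ii) every continuous map F : Δ^{(d+1)(q-1)} → ℝ^d admits a Tverberg partition (the Topological Tverberg Theorem). -/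
open scoped BigOperators

noncomputable section

/-!
Let `N = (d + 1) * (q - 1)`. The Topological Tverberg Theorem follows from the `d`-Skeleton
Conjecture by restriction to the skeleton. For the converse, extend `f` from the skeleton to a
continuous `F` by Tietze's theorem and approximate `F` by maps in general position, for which
disjoint faces whose codimensions add up to more than `d` have no common image point. As `Δ^N` has
only `N + 1` vertices, all faces of a Tverberg partition of such a map have dimension at most `d`.
By compactness the maps with a Tverberg partition into faces of dimension at most `d` form a closed
set in the compact-open topology, so `F` is one of them; such a partition only sees `f`.

Maps in general position are dense because a smooth map can be perturbed by a generic linear map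
`x ↦ ∑ l, x l • a l`. A coincidence of images is a zero of a map `G (x, a)` into a space of larger
dimension than the space of the points `x`. Adding a suitable linear image `R c` to `a` adds exactly
`c` to `G`, so the bad parameters `a` form a `C¹` image of a space of smaller dimension, which has
dense complement.
-/

open Set Module

section Transversality

variable {X A F : Type*} [NormedAddCommGroup X] [NormedSpace ℝ X] [FiniteDimensional ℝ X]
  [NormedAddCommGroup A] [NormedSpace ℝ A] [FiniteDimensional ℝ A]
  [NormedAddCommGroup F] [NormedSpace ℝ F] [FiniteDimensional ℝ F]

theorem dense_setOf_forall_ne_zero_of_finrank_lt {G : X × A → F} (hG : ContDiff ℝ 1 G)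
    (R : F →ₗ[ℝ] A) (hGR : ∀ x a c, G (x, a + R c) = G (x, a) + c)
    (hXF : finrank ℝ X < finrank ℝ F) : Dense {a | ∀ x, G (x, a) ≠ 0} := by
  obtain ⟨K, hK⟩ := (LinearMap.range R).exists_isCompl
  have hR : Function.Injective R := (injective_iff_map_eq_zero R).2 fun c hc ↦ by
    simpa [hc] using hGR 0 0 c
  have hdim : finrank ℝ (X × K) < finrank ℝ A := by
    rw [finrank_prod, ← Submodule.finrank_add_eq_of_isCompl hK, LinearMap.finrank_range_of_inj hR]
    lia
  -- If `G (x, k + R c) = 0`, then `c = -G (x, k)`.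
  let Φ : X × K → A := fun p ↦ p.2 - R (G (p.1, p.2))
  have hΦ : ContDiff ℝ 1 Φ := by
    have hk : ContDiff ℝ 1 fun p : X × K ↦ (p.2 : A) := K.subtypeL.contDiff.comp contDiff_snd
    exact hk.sub (R.toContinuousLinearMap.contDiff.comp (hG.comp (contDiff_fst.prodMk hk)))
  refine (hΦ.dense_compl_range_of_finrank_lt_finrank hdim).mono ?_
  intro a ha x hx
  obtain ⟨_, ⟨c, rfl⟩, k, hk, rfl⟩ :=
    Submodule.mem_sup.1 (hK.sup_eq_top ▸ Submodule.mem_top : a ∈ _)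
  rw [add_comm, hGR] at hx
  refine ha ⟨(x, ⟨k, hk⟩), ?_⟩
  simp only [Φ, eq_neg_of_add_eq_zero_left hx, map_neg]
  abel

end Transversality

section FaceDirection

variable {ι : Type*} [Fintype ι]

/-- The direction of the affine span of the face spanned by the vertices in `S`. -/
def faceDirection (S : Finset ι) : Submodule ℝ (ι → ℝ) where
  carrier := {u | (∀ i ∉ S, u i = 0) ∧ ∑ i, u i = 0}
  add_mem' hu hw := ⟨fun i hi ↦ by simp [hu.1 i hi, hw.1 i hi],
    by simp [Finset.sum_add_distrib, hu.2, hw.2]⟩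
  zero_mem' := by simp
  smul_mem' c u hu := ⟨fun i hi ↦ by simp [hu.1 i hi], by simp [← Finset.mul_sum, hu.2]⟩

lemma finrank_faceDirection_add_one_le {S : Finset ι} (hS : S.Nonempty) :
    finrank ℝ (faceDirection S) + 1 ≤ S.card := by
  classical
  obtain ⟨v, hv⟩ := hS
  let restr : faceDirection S →ₗ[ℝ] (S.erase v → ℝ) :=
    LinearMap.funLeft ℝ ℝ (↑) ∘ₗ (faceDirection S).subtype
  have hrestr : Function.Injective restr := by
    refine (injective_iff_map_eq_zero restr).2 fun ⟨u, hu⟩ h ↦ Subtype.ext ?_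
    have hoff : ∀ i ≠ v, u i = 0 := fun i hi ↦ by
      by_cases hiS : i ∈ S
      · exact congrFun h ⟨i, Finset.mem_erase.2 ⟨hi, hiS⟩⟩
      · exact hu.1 i hiS
    have hv0 : u v = 0 := by rw [← Fintype.sum_eq_single v hoff, hu.2]
    ext i
    by_cases hi : i = v
    · rw [hi]; exact hv0
    · exact hoff i hi
  calc finrank ℝ (faceDirection S) + 1 ≤ finrank ℝ (S.erase v → ℝ) + 1 :=
        Nat.add_le_add_right (LinearMap.finrank_le_finrank_of_injective hrestr) 1
    _ = S.card := by
        rw [finrank_fintype_fun_eq_card, Fintype.card_coe, Finset.card_erase_add_one hv]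

lemma finrank_prod_faceDirection_lt {κ E : Type*} [Fintype κ] [AddCommGroup E] [Module ℝ E]
    [FiniteDimensional ℝ E] {S : κ → Finset ι} (hne : ∀ k, (S k).Nonempty)
    (hcard : ∑ k, (S k).card + finrank ℝ E < Fintype.card κ * (finrank ℝ E + 1)) :
    finrank ℝ (E × ∀ k, faceDirection (S k)) < finrank ℝ (κ → E) := by
  have hle : ∑ k, (finrank ℝ (faceDirection (S k)) + 1) ≤ ∑ k, (S k).card :=
    Finset.sum_le_sum fun k _ ↦ finrank_faceDirection_add_one_le (hne k)
  rw [Finset.sum_add_distrib, Finset.sum_const, Finset.card_univ, smul_eq_mul, mul_one] at hle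
  rw [finrank_prod, finrank_pi_fintype, finrank_pi_fintype, Finset.sum_const, Finset.card_univ,
    smul_eq_mul]
  lia

/-- The point with displacement `u` from the vertex `v`, in the coordinates of `ι → ℝ`; for `v ∈ S`
these points form the affine span of the face spanned by `S`. -/
def facePoint [DecidableEq ι] {S : Finset ι} (v : ι) (u : faceDirection S) : ι → ℝ :=
  Pi.single v 1 + (u : ι → ℝ)

variable [DecidableEq ι] {S : Finset ι} {v : ι}

lemma facePoint_apply_of_notMem (hv : v ∈ S) (u : faceDirection S) {i : ι} (hi : i ∉ S) :
    facePoint v u i = 0 := by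
  have hiv : i ≠ v := fun h ↦ hi (h ▸ hv)
  simp [facePoint, hiv, u.2.1 i hi]

lemma sum_facePoint (v : ι) (u : faceDirection S) : ∑ i, facePoint v u i = 1 := by
  simp [facePoint, Finset.sum_add_distrib, u.2.2]

lemma exists_facePoint_eq (hv : v ∈ S) {x : ι → ℝ} (hx : ∀ i ∉ S, x i = 0) (hsum : ∑ i, x i = 1) :
    ∃ u : faceDirection S, facePoint v u = x := by
  refine ⟨⟨x - Pi.single v 1, fun i hi ↦ ?_, by simp [hsum]⟩, add_sub_cancel _ _⟩
  have hiv : i ≠ v := fun h ↦ hi (h ▸ hv)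
  simp [hx i hi, hiv]

lemma contDiff_facePoint (v : ι) : ContDiff ℝ 1 (facePoint v : faceDirection S → ι → ℝ) :=
  contDiff_const.add (faceDirection S).subtypeL.contDiff

end FaceDirection

section LinearPerturbation

variable {ι κ E : Type*} [Fintype ι] [DecidableEq ι] [Fintype κ] {S : κ → Finset ι}
  [AddCommGroup E] [Module ℝ E]

/-- Assigns to each vertex of the face `S k` the vector given for that face. If the faces are
disjoint, this perturbs the values at points of the affine span of `S k` by exactly that vector. -/
def spreadOverFaces (S : κ → Finset ι) (E : Type*) [AddCommGroup E] [Module ℝ E] :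
    (κ → E) →ₗ[ℝ] (ι → E) :=
  LinearMap.pi fun l ↦ ∑ k with l ∈ S k, LinearMap.proj k

lemma sum_smul_spreadOverFaces (hS : Pairwise fun k k' ↦ Disjoint (S k) (S k')) {k : κ}
    {x : ι → ℝ} (hx : ∀ l ∉ S k, x l = 0) (hsum : ∑ l, x l = 1) (c : κ → E) :
    ∑ l, x l • spreadOverFaces S E c l = c k := by
  have hterm : ∀ l, x l • spreadOverFaces S E c l = x l • c k := by
    intro l
    by_cases hl : l ∈ S k
    · have huniq : ({k' | l ∈ S k'} : Finset κ) = {k} := by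
        ext k'
        simp only [Finset.mem_filter_univ, Finset.mem_singleton]
        refine ⟨fun hl' ↦ ?_, fun h ↦ h ▸ hl⟩
        by_contra hne
        exact Finset.disjoint_left.1 (hS hne) hl' hl
      simp [spreadOverFaces, huniq]
    · simp [hx l hl]
  rw [Finset.sum_congr rfl fun l _ ↦ hterm l, ← Finset.sum_smul, hsum, one_smul]

end LinearPerturbation

section Perturbation

variable {N : ℕ} {κ E : Type*} [Fintype κ] {S : κ → Finset (Fin (N + 1))}
  [NormedAddCommGroup E] [NormedSpace ℝ E] [FiniteDimensional ℝ E]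

theorem dense_setOf_iInter_perturbation_eq_empty (hS : Pairwise fun k k' ↦ Disjoint (S k) (S k'))
    (hne : ∀ k, (S k).Nonempty)
    (hcard : ∑ k, (S k).card + finrank ℝ E < Fintype.card κ * (finrank ℝ E + 1))
    {g : (Fin (N + 1) → ℝ) → E} (hg : ContDiff ℝ 1 g) :
    Dense {a : Fin (N + 1) → E |
      ⋂ k, (fun x ↦ g x + ∑ l, x l • a l) '' simpFace (S k) = ∅} := by
  choose v hv using fun k ↦ hne k
  let G : (E × ∀ k, faceDirection (S k)) × (Fin (N + 1) → E) → κ → E :=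
    fun p k ↦ g (facePoint (v k) (p.1.2 k)) + ∑ l, facePoint (v k) (p.1.2 k) l • p.2 l - p.1.1
  have hG : ContDiff ℝ 1 G := by
    refine contDiff_pi.2 fun k ↦ ?_
    have hpoint : ContDiff ℝ 1 fun p : (E × ∀ k, faceDirection (S k)) × (Fin (N + 1) → E) ↦
        facePoint (v k) (p.1.2 k) :=
      (contDiff_facePoint (v k)).comp (contDiff_pi.1 contDiff_fst.snd k)
    exact ((hg.comp hpoint).add (ContDiff.sum fun l _ ↦ (contDiff_pi.1 hpoint l).smul
      (contDiff_pi.1 contDiff_snd l))).sub contDiff_fst.fst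
  have hGR : ∀ z a c, G (z, a + spreadOverFaces S E c) = G (z, a) + c := fun z a c ↦ by
    ext1 k
    simp only [G, Pi.add_apply, smul_add, Finset.sum_add_distrib, sum_smul_spreadOverFaces hS
      (fun _ ↦ facePoint_apply_of_notMem (hv k) (z.2 k)) (sum_facePoint (v k) (z.2 k)) c]
    abel
  refine (dense_setOf_forall_ne_zero_of_finrank_lt hG _ hGR
    (finrank_prod_faceDirection_lt hne hcard)).mono fun a ha ↦ ?_
  refine eq_empty_of_forall_notMem fun y hy ↦ ?_
  choose x hx hxy using mem_iInter.1 hy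
  choose u hu using fun k ↦ exists_facePoint_eq (hv k) (hx k).2 (hx k).1.2
  refine ha (y, u) (funext fun k ↦ ?_)
  simp only [G, hu, hxy, sub_self, Pi.zero_apply]

end Perturbation

section CompactOpen

variable {X Y κ : Type*} [TopologicalSpace X] [LocallyCompactSpace X] [TopologicalSpace Y]
  [T2Space Y]

theorem isClosed_setOf_iInter_image_nonempty {K : κ → Set X} (hK : ∀ k, IsCompact (K k)) :
    IsClosed {F : C(X, Y) | (⋂ k, F '' K k).Nonempty} := by
  cases isEmpty_or_nonempty κ
  · simp only [iInter_of_empty, isClosed_const]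
  have : ∀ k, CompactSpace (K k) := fun k ↦ isCompact_iff_compactSpace.1 (hK k)
  let coincidences : Set (C(X, Y) × ∀ k, K k) := {p | ∀ k k', p.1 (p.2 k) = p.1 (p.2 k')}
  have hcoincidences : IsClosed coincidences := by
    simp only [coincidences, ofPred_forall]
    exact isClosed_iInter fun k ↦ isClosed_iInter fun k' ↦
      isClosed_eq (by fun_prop) (by fun_prop)
  convert isClosedMap_fst_of_compactSpace _ hcoincidences
  ext F
  constructor
  · rintro ⟨y, hy⟩
    choose x hx hxy using mem_iInter.1 hy
    exact ⟨(F, fun k ↦ ⟨x k, hx k⟩), fun k k' ↦ (hxy k).trans (hxy k').symm, rfl⟩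
  · rintro ⟨⟨F, x⟩, hx, rfl⟩
    exact ⟨F (x (Classical.arbitrary κ)), mem_iInter.2 fun k ↦ ⟨x k, (x k).2, hx k _⟩⟩

end CompactOpen

section Simplex

variable {N : ℕ}

lemma isCompact_simpFace (S : Finset (Fin (N + 1))) : IsCompact (simpFace S) := by
  have hS : simpFace S = stdSimplex ℝ (Fin (N + 1)) ∩ {x | ∀ i ∉ S, x i = 0} := rfl
  rw [hS]
  refine (isCompact_stdSimplex ℝ (Fin (N + 1))).inter_right ?_
  simp only [ofPred_forall]
  exact isClosed_iInter fun i ↦ isClosed_iInter fun _ ↦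
    isClosed_eq (continuous_apply i) continuous_const

lemma isClosed_setOf_biInter_image_simpFace_nonempty {Y : Type*} [TopologicalSpace Y]
    [T2Space Y] (Q : Finset (Finset (Fin (N + 1)))) :
    IsClosed {F : C(Fin (N + 1) → ℝ, Y) | (⋂ S ∈ Q, F '' simpFace S).Nonempty} := by
  have h := isClosed_setOf_iInter_image_nonempty (Y := Y) fun S : Q ↦ isCompact_simpFace S.1
  simpa only [iInter_subtype] using h

lemma simpFace_subset_skel {k : ℕ} {S : Finset (Fin (N + 1))} (hS : S.card ≤ k + 1) :
    simpFace S ⊆ skel N k := by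
  refine fun x hx ↦ ⟨hx.1, ?_⟩
  have hsupp : {i | x i ≠ 0} ⊆ (S : Set (Fin (N + 1))) := fun i hi ↦ by
    by_contra hiS
    exact hi (hx.2 i hiS)
  calc {i | x i ≠ 0}.ncard ≤ (S : Set (Fin (N + 1))).ncard := ncard_le_ncard hsupp S.finite_toSet
    _ = S.card := ncard_coe_finset S
    _ ≤ k + 1 := hS

lemma skel_eq_iUnion_simpFace (N k : ℕ) :
    skel N k = ⋃ S ∈ {S : Finset (Fin (N + 1)) | S.card ≤ k + 1}, simpFace S := by
  refine subset_antisymm (fun x hx ↦ ?_) (iUnion₂_subset fun S hS ↦ simpFace_subset_skel hS)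
  refine mem_iUnion₂.2 ⟨Finset.univ.filter fun i ↦ x i ≠ 0, ?_, hx.1, fun i hi ↦ ?_⟩
  · rw [mem_ofPred_eq, ← ncard_coe_finset, Finset.coe_filter_univ]
    exact hx.2
  · simpa using hi

lemma isClosed_skel (N k : ℕ) : IsClosed (skel N k) := by
  rw [skel_eq_iUnion_simpFace]
  exact (toFinite _).isClosed_biUnion fun S _ ↦ (isCompact_simpFace S).isClosed

lemma exists_continuousMap_eqOn_skel {Y : Type*} [TopologicalSpace Y] [TietzeExtension.{0} Y]
    {k : ℕ} {f : (Fin (N + 1) → ℝ) → Y} (hf : ContinuousOn f (skel N k)) :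
    ∃ F : C(Fin (N + 1) → ℝ, Y), EqOn F f (skel N k) := by
  obtain ⟨F, hF⟩ := ContinuousMap.exists_restrict_eq (isClosed_skel N k)
    ⟨_, continuousOn_iff_continuous_domRestrict.1 hf⟩
  exact ⟨F, fun x hx ↦ DFunLike.congr_fun hF ⟨x, hx⟩⟩

end Simplex

section GeneralPosition

variable {N : ℕ} {E : Type*} [NormedAddCommGroup E] [NormedSpace ℝ E]

/-- A map of `Δ^N` to a space of dimension `d` is in general position if disjoint faces whose
codimensions `d - dim σ_S` add up to more than `d` have images without a common point. The
inequality is written without subtraction, for `d - dim σ_S = d + 1 - |S|` may be negative. -/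
def IsInGeneralPosition (F : (Fin (N + 1) → ℝ) → E) : Prop :=
  ∀ Q : Finset (Finset (Fin (N + 1))), (∀ S ∈ Q, S.Nonempty) →
    (∀ S ∈ Q, ∀ T ∈ Q, S ≠ T → Disjoint S T) →
    ∑ S ∈ Q, S.card + finrank ℝ E < Q.card * (finrank ℝ E + 1) →
    ⋂ S ∈ Q, F '' simpFace S = ∅

variable [FiniteDimensional ℝ E]

lemma dense_setOf_biInter_image_simpFace_eq_empty {Q : Finset (Finset (Fin (N + 1)))}
    (hne : ∀ S ∈ Q, S.Nonempty) (hdisj : ∀ S ∈ Q, ∀ T ∈ Q, S ≠ T → Disjoint S T)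
    (hcard : ∑ S ∈ Q, S.card + finrank ℝ E < Q.card * (finrank ℝ E + 1)) :
    Dense {F : C(Fin (N + 1) → ℝ, E) | ⋂ S ∈ Q, F '' simpFace S = ∅} := by
  refine Dense.of_closure (ContinuousMap.dense_setOfPred_contDiff.mono fun g hg ↦ ?_)
  let perturb : (Fin (N + 1) → E) → C(Fin (N + 1) → ℝ, E) :=
    fun a ↦ ⟨fun x ↦ g x + ∑ l, x l • a l, by fun_prop⟩
  have hperturb : Continuous perturb :=
    ContinuousMap.continuous_of_continuous_uncurry _ <|
    show Continuous fun p : (Fin (N + 1) → E) × (Fin (N + 1) → ℝ) ↦ g p.2 + ∑ l, p.2 l • p.1 l by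
      fun_prop
  have hperturb_zero : perturb 0 = g := by ext x; simp [perturb]
  have hdense := dense_setOf_iInter_perturbation_eq_empty (S := fun S : Q ↦ S.1)
    (fun S T hST ↦ hdisj S S.2 T T.2 fun h ↦ hST (Subtype.ext h)) (fun S ↦ hne S S.2)
    (by rwa [Finset.sum_coe_sort Q Finset.card, Fintype.card_coe])
    ((mem_ofPred.1 hg).of_le (mod_cast le_top))
  rw [← hperturb_zero]
  refine map_mem_closure hperturb (hdense 0) fun a ha ↦ ?_
  simpa only [perturb, mem_ofPred_eq, iInter_subtype, ContinuousMap.coe_mk] using ha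

theorem dense_setOf_isInGeneralPosition :
    Dense {F : C(Fin (N + 1) → ℝ, E) | IsInGeneralPosition F} := by
  let family : Finset (Finset (Fin (N + 1))) → Set C(Fin (N + 1) → ℝ, E) :=
    fun Q ↦ {F | ⋂ S ∈ Q, F '' simpFace S = ∅}
  let deficient : Set (Finset (Finset (Fin (N + 1)))) :=
    {Q | (∀ S ∈ Q, S.Nonempty) ∧ (∀ S ∈ Q, ∀ T ∈ Q, S ≠ T → Disjoint S T) ∧
      ∑ S ∈ Q, S.card + finrank ℝ E < Q.card * (finrank ℝ E + 1)}
  have hopen : ∀ Q, IsOpen (family Q) := fun Q ↦ by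
    simpa only [family, compl_ofPred, not_nonempty_iff_eq_empty] using
      (isClosed_setOf_biInter_image_simpFace_nonempty (Y := E) Q).isOpen_compl
  refine (((toFinite deficient).image family).dense_sInter (forall_mem_image.2 fun Q _ ↦ hopen Q)
    (forall_mem_image.2 fun Q hQ ↦
      dense_setOf_biInter_image_simpFace_eq_empty hQ.1 hQ.2.1 hQ.2.2)).mono ?_
  exact fun F hF Q hne hdisj hcard ↦ mem_sInter.1 hF _ (mem_image_of_mem _ ⟨hne, hdisj, hcard⟩)

end GeneralPosition

section Tverberg

variable {N d q : ℕ} {P : Finset (Finset (Fin (N + 1)))}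

lemma isClosed_setOf_isTverbergPartition (P : Finset (Finset (Fin (N + 1)))) :
    IsClosed {F : C(Fin (N + 1) → ℝ, Euc d) | IsTverbergPartition q F P} := by
  simp only [IsTverbergPartition, ofPred_and]
  exact isClosed_const.inter (isClosed_const.inter (isClosed_const.inter
    (isClosed_setOf_biInter_image_simpFace_nonempty P)))

lemma isClosed_setOf_exists_isTverbergPartition_card_le (N d q k : ℕ) :
    IsClosed {F : C(Fin (N + 1) → ℝ, Euc d) |
      ∃ P, IsTverbergPartition q F P ∧ ∀ S ∈ P, S.card ≤ k} := by
  simp only [ofPred_exists, ofPred_and]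
  exact isClosed_iUnion_of_finite fun P ↦
    (isClosed_setOf_isTverbergPartition P).inter isClosed_const

lemma IsTverbergPartition.congr_of_eqOn_skel {k : ℕ} {f g : (Fin (N + 1) → ℝ) → Euc d}
    (hP : IsTverbergPartition q f P) (hfg : EqOn f g (skel N k)) (hcard : ∀ S ∈ P, S.card ≤ k + 1) :
    IsTverbergPartition q g P := by
  have himage : ∀ S ∈ P, f '' simpFace S = g '' simpFace S := fun S hS ↦
    (hfg.mono (simpFace_subset_skel (hcard S hS))).image_eq
  exact ⟨hP.1, hP.2.1, hP.2.2.1, iInter₂_congr himage ▸ hP.2.2.2⟩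

-- Omitting a face of dimension more than `d` leaves too few vertices for the other `q - 1` faces.
theorem IsInGeneralPosition.card_le_of_isTverbergPartition {F : (Fin (N + 1) → ℝ) → Euc d}
    (hF : IsInGeneralPosition F) (hP : IsTverbergPartition q F P) (hN : N ≤ (d + 1) * (q - 1)) :
    ∀ S ∈ P, S.card ≤ d + 1 := by
  obtain ⟨rfl, hne, hdisj, hinter⟩ := hP
  by_contra! ⟨S, hS, hSd⟩
  have hsum : ∑ T ∈ P.erase S, T.card + S.card ≤ N + 1 := by
    rw [Finset.sum_erase_add P _ hS, ← Finset.card_biUnion hdisj]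
    exact card_finset_fin_le _
  have hdeficient : ∑ T ∈ P.erase S, T.card + finrank ℝ (Euc d)
      < (P.erase S).card * (finrank ℝ (Euc d) + 1) := by
    rw [finrank_euclideanSpace_fin, Finset.card_erase_of_mem hS, mul_comm]
    lia
  have hempty := hF (P.erase S) (fun T hT ↦ hne T (Finset.mem_of_mem_erase hT))
    (fun T hT U hU ↦ hdisj T (Finset.mem_of_mem_erase hT) U (Finset.mem_of_mem_erase hU)) hdeficient
  exact (hinter.mono (biInter_subset_biInter_left (Finset.erase_subset S P))).ne_empty hempty

end Tverberg

/-- The `d`-Skeleton Conjecture is equivalent to the Topological Tverberg Theorem. -/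
theorem dSkeleton_iff_topologicalTverberg (d q : ℕ) (hd : 1 ≤ d) (hq : 1 ≤ q) :
    (∀ f : (Fin ((d+1)*(q-1)+1) → ℝ) → Euc d,
      ContinuousOn f (skel ((d+1)*(q-1)) d) →
      ∃ P : Finset (Finset (Fin ((d+1)*(q-1)+1))),
        IsTverbergPartition q f P ∧ ∀ S ∈ P, S.card ≤ d + 1) ↔
    (∀ F : (Fin ((d+1)*(q-1)+1) → ℝ) → Euc d,
      ContinuousOn F (stdSimp ((d+1)*(q-1))) →
      ∃ P : Finset (Finset (Fin ((d+1)*(q-1)+1))), IsTverbergPartition q F P) := by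
  constructor
  · intro H F hF
    obtain ⟨P, hP, -⟩ := H F (hF.mono fun x hx ↦ hx.1)
    exact ⟨P, hP⟩
  · intro H f hf
    obtain ⟨F, hFf⟩ := exists_continuousMap_eqOn_skel hf
    have hclosed := isClosed_setOf_exists_isTverbergPartition_card_le ((d+1)*(q-1)) d q (d + 1)
    obtain ⟨P, hP, hcard⟩ := hclosed.closure_subset_iff.2 (fun G hG ↦ by
      obtain ⟨P, hP⟩ := H G G.continuous.continuousOn
      exact ⟨P, hP, hG.card_le_of_isTverbergPartition hP le_rfl⟩)
      (dense_setOf_isInGeneralPosition F)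
    exact ⟨P, hP.congr_of_eqOn_skel hFf hcard, hcard⟩
end
end
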